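/- For every fixed ε > 0 there exists a constant β₀ = β₀(ε) > 0 such that for every 0 < β ≤ β₀ and every edge-probability function p = p(n) satisfying n·p(n) − ln n − ln ln n → ∞ the following holds with high probability for G sampled from G(n,p), with t = np/100: for every spanning subgraph H ⊆ G whose degree sequence satisfies d_H(v) ≤ d̃(t,ε)_v for every vertex v, the graph G − H contains a spanning subgraph Γ₀ ∈ 𝓛(n,β) with at most 2·10⁶·β·n²p edges; moreover, for every edge set E₀ ⊆ E(G), the graph Γ₀ + E₀ also belongs to 𝓛(n,β), with the same witnessing partition V = V₁ ∪ D_t(G). -/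

import Mathlib

open Filter Finset SimpleGraph
open scoped Classical

/-- The probability weight of a particular graph `G` on `[n]` under `G(n,p)`. -/
noncomputable def gnpWeight (n : ℕ) (p : ℝ) (G : SimpleGraph (Fin n)) : ℝ :=
  p ^ G.edgeFinset.card * (1 - p) ^ (n.choose 2 - G.edgeFinset.card)

/-- The probability that a random graph `G ~ G(n,p)` satisfies the predicate `A`. -/
noncomputable def gnpProb (n : ℕ) (p : ℝ) (A : SimpleGraph (Fin n) → Prop) : ℝ :=
  ∑ G : SimpleGraph (Fin n), if A G then gnpWeight n p G else 0

/-- A sequence of graph properties holds with high probability in `G(n, p n)`. -/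
def WHP (p : ℕ → ℝ) (A : ∀ n : ℕ, SimpleGraph (Fin n) → Prop) : Prop :=
  Tendsto (fun n => gnpProb n (p n) (A n)) atTop (nhds 1)

/-- Number of edges of a graph. -/
noncomputable def edgeCount {V : Type*} [Fintype V] (G : SimpleGraph V) : ℕ :=
  G.edgeFinset.card

/-- Number of edges with both endpoints in `U`. -/
noncomputable def eIn {V : Type*} [Fintype V] (G : SimpleGraph V) (U : Finset V) : ℕ :=
  (G.edgeFinset.filter (fun e => ∀ v ∈ e, v ∈ U)).card

/-- Number of edges with one endpoint in `U` and the other in `Z` (for disjoint `U`, `Z`). -/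
noncomputable def eBetween {V : Type*} [Fintype V] (G : SimpleGraph V) (U Z : Finset V) : ℕ :=
  ((U ×ˢ Z).filter (fun q => G.Adj q.1 q.2)).card

/-- External neighbourhood of a vertex set. -/
noncomputable def extNbhd {V : Type*} [Fintype V] (G : SimpleGraph V) (U : Finset V) : Finset V :=
  Finset.univ.filter (fun v => v ∉ U ∧ ∃ u ∈ U, G.Adj u v)

/-- `G` is an `(R, f)`-expander: every set `U` with `|U| ≤ R` satisfies `|N(U)| ≥ f(|U|)·|U|`. -/
def IsExpander {V : Type*} [Fintype V] (G : SimpleGraph V) (R : ℝ) (f : ℕ → ℝ) : Prop :=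
  ∀ U : Finset V, U.Nonempty → (U.card : ℝ) ≤ R →
    f U.card * U.card ≤ ((extNbhd G U).card : ℝ)

/-- The expansion function `f_β` on `{1, …, ⌊β n₁⌋}`. -/
noncomputable def fBeta (β : ℝ) (n1 : ℕ) (t : ℕ) : ℝ :=
  if t = Nat.floor (β * n1) then 2 * (1 + 39 * β) / (3 * β)
  else if (t : ℝ) < (n1 : ℝ) ^ (0.1 : ℝ) then Real.log n1 ^ (0.8 : ℝ)
  else 11

/-- `G₁` is `(n₁, d, β)`-quasi-random. -/
def QuasiRandom {V : Type*} [Fintype V] (G1 : SimpleGraph V) (n1 : ℕ) (d β : ℝ) : Prop :=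
  (∀ v : V, d / 150 ≤ (G1.degree v : ℝ)) ∧
  (∀ U : Finset V, (U.card : ℝ) < (n1 : ℝ) ^ (0.11 : ℝ) * Real.log n1 →
    (eIn G1 U : ℝ) ≤ d ^ (0.13 : ℝ) * U.card) ∧
  (∀ U : Finset V, (U.card : ℝ) < 12 * β * n1 →
    (eIn G1 U : ℝ) ≤ 50 * β * d * U.card) ∧
  (∀ U Z : Finset V, Disjoint U Z → U.card = Nat.floor (β * n1) →
    Z.card = Nat.floor ((1 / 3 - 27 * β) * n1) →
    (n1 : ℝ) * Real.log (Real.log n1) ≤ (eBetween G1 U Z : ℝ))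

/-- Longest path length in `G`. -/
noncomputable def longestPath {V : Type*} [Fintype V] (G : SimpleGraph V) : ℕ :=
  sSup {l : ℕ | ∃ (u v : V) (q : G.Walk u v), q.IsPath ∧ q.length = l}

/-- `{u, v}` is a booster with respect to `Γ`. -/
def IsBooster {V : Type*} [Fintype V] (Γ : SimpleGraph V) (u v : V) : Prop :=
  u ≠ v ∧ ¬ Γ.Adj u v ∧
    ((Γ ⊔ fromEdgeSet {s(u, v)}).IsHamiltonian ∨
      longestPath Γ < longestPath (Γ ⊔ fromEdgeSet {s(u, v)}))

/-- The booster set `B_Γ(v)`. -/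
noncomputable def boosterSet {V : Type*} [Fintype V] (Γ : SimpleGraph V) (v : V) : Finset V :=
  Finset.univ.filter (fun w => IsBooster Γ v w)

/-- Membership in the family `𝓛(n, β)` with witnessing partition `V = V₁ ∪ D`. -/
def InFamilyL (n : ℕ) (β : ℝ) (G : SimpleGraph (Fin n)) (V1 D : Finset (Fin n)) : Prop :=
  Disjoint V1 D ∧ V1 ∪ D = Finset.univ ∧
  ((D.card : ℝ) ≤ (n : ℝ) ^ (0.09 : ℝ)) ∧
  (∀ u ∈ D, 2 ≤ (G.neighborFinset u ∩ V1).card) ∧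
  (∀ u ∈ D, ∀ v ∈ D, ∀ q : G.Walk u v, q.IsPath → 0 < q.length →
    2 * Real.log n / (3 * Real.log (Real.log n)) < (q.length : ℝ)) ∧
  (∀ u ∈ D, ∀ q : G.Walk u u, q.IsCycle →
    2 * Real.log n / (3 * Real.log (Real.log n)) < (q.length : ℝ)) ∧
  IsExpander (G.induce (V1 : Set (Fin n))) (β * V1.card) (fBeta β V1.card)

/-- The set `D_t(G)` of vertices of degree less than `t`. -/
noncomputable def lowDegSet (n : ℕ) (t : ℝ) (G : SimpleGraph (Fin n)) : Finset (Fin n) :=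
  Finset.univ.filter (fun v => (G.degree v : ℝ) < t)

noncomputable def allE (n : ℕ) : Finset (Sym2 (Fin n)) :=
  Finset.univ.filter (fun e => ¬ e.IsDiag)

lemma mem_allE {n : ℕ} {e : Sym2 (Fin n)} : e ∈ allE n ↔ ¬ e.IsDiag := by
  simp [allE]

lemma card_allE (n : ℕ) : (allE n).card = n.choose 2 := by
  have h := Sym2.card_subtype_not_diag (α := Fin n)
  rw [Fintype.card_subtype, Fintype.card_fin] at h
  rw [← h, allE]

lemma edgeSet_subset_allE {n : ℕ} (G : SimpleGraph (Fin n)) {e : Sym2 (Fin n)}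
    (he : e ∈ G.edgeSet) : e ∈ allE n :=
  mem_allE.2 (G.not_isDiag_of_mem_edgeSet he)

lemma sum_graphs_prod (n : ℕ) (x y : Sym2 (Fin n) → ℝ) :
    ∑ G : SimpleGraph (Fin n), ∏ e ∈ allE n, (if e ∈ G.edgeSet then x e else y e)
      = ∏ e ∈ allE n, (x e + y e) := by
  rw [Finset.prod_add]
  symm
  refine Finset.sum_bij' (fun s _ => fromEdgeSet (s : Set (Sym2 (Fin n))))
    (fun G _ => (allE n).filter (fun e => e ∈ G.edgeSet)) ?_ ?_ ?_ ?_ ?_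
  · intros; simp
  · intro G _; simp [Finset.filter_subset]
  · intro s hs
    rw [Finset.mem_powerset] at hs
    ext e
    simp only [Finset.mem_filter, edgeSet_fromEdgeSet]
    constructor
    · rintro ⟨_, h⟩; exact h.1
    · intro h; exact ⟨hs h, h, by have := mem_allE.1 (hs h); simpa [Sym2.diagSet] using this⟩
  · intro G _
    apply SimpleGraph.edgeSet_injective
    ext e
    simp only [edgeSet_fromEdgeSet, Finset.coe_filter]
    constructor
    · rintro ⟨h, _⟩; exact h.2
    · intro h
      exact ⟨⟨edgeSet_subset_allE G h, h⟩, by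
        have := G.not_isDiag_of_mem_edgeSet h; simpa [Sym2.diagSet] using this⟩
  · intro s hs
    rw [Finset.mem_powerset] at hs
    have key : ∀ e ∈ allE n, (e ∈ (fromEdgeSet (s : Set (Sym2 (Fin n)))).edgeSet ↔ e ∈ s) := by
      intro e he
      have := mem_allE.1 he
      simp [edgeSet_fromEdgeSet, Sym2.diagSet, this]
    rw [← Finset.prod_sdiff hs, mul_comm]
    congr 1
    · apply Finset.prod_congr rfl
      intro e he
      rw [Finset.mem_sdiff] at he
      rw [if_neg]
      rw [key e he.1]; exact he.2
    · apply Finset.prod_congr rfl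
      intro e he
      rw [if_pos]
      rw [key e (hs he)]; exact he

lemma gnpWeight_eq (n : ℕ) (p : ℝ) (G : SimpleGraph (Fin n)) :
    gnpWeight n p G = ∏ e ∈ allE n, (if e ∈ G.edgeSet then p else 1 - p) := by
  have h1 : (allE n).filter (fun e => e ∈ G.edgeSet) = G.edgeFinset := by
    ext e
    simp only [Finset.mem_filter, SimpleGraph.mem_edgeFinset]
    exact ⟨fun h => h.2, fun h => ⟨edgeSet_subset_allE G h, h⟩⟩
  have h2 := Finset.card_filter_add_card_filter_not (s := allE n) (fun e => e ∈ G.edgeSet)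
  rw [card_allE, h1] at h2
  rw [Finset.prod_ite, Finset.prod_const, Finset.prod_const, h1, gnpWeight]
  congr 2
  omega

lemma gnpWeight_nonneg {n : ℕ} {p : ℝ} (h0 : 0 ≤ p) (h1 : p ≤ 1) (G : SimpleGraph (Fin n)) :
    0 ≤ gnpWeight n p G := by
  unfold gnpWeight
  have : 0 ≤ 1 - p := by linarith
  positivity

lemma gnpWeight_sum (n : ℕ) (p : ℝ) : ∑ G : SimpleGraph (Fin n), gnpWeight n p G = 1 := by
  simp_rw [gnpWeight_eq]
  rw [sum_graphs_prod]
  simp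

lemma gnpProb_nonneg {n : ℕ} {p : ℝ} (h0 : 0 ≤ p) (h1 : p ≤ 1)
    (A : SimpleGraph (Fin n) → Prop) : 0 ≤ gnpProb n p A := by
  apply Finset.sum_nonneg
  intro G _
  split_ifs
  · exact gnpWeight_nonneg h0 h1 G
  · exact le_rfl

lemma gnpProb_mono {n : ℕ} {p : ℝ} (h0 : 0 ≤ p) (h1 : p ≤ 1)
    {A B : SimpleGraph (Fin n) → Prop} (h : ∀ G, A G → B G) : gnpProb n p A ≤ gnpProb n p B := by
  apply Finset.sum_le_sum
  intro G _
  have := gnpWeight_nonneg h0 h1 G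
  by_cases hA : A G
  · simp [hA, h G hA]
  · simp only [hA, if_false]; split_ifs <;> simp [this]

lemma gnpProb_compl (n : ℕ) (p : ℝ) (A : SimpleGraph (Fin n) → Prop) :
    gnpProb n p A = 1 - gnpProb n p (fun G => ¬ A G) := by
  rw [eq_sub_iff_add_eq, ← gnpWeight_sum n p, gnpProb, gnpProb, ← Finset.sum_add_distrib]
  apply Finset.sum_congr rfl
  intro G _
  by_cases hA : A G <;> simp [hA]

lemma gnpProb_union {n : ℕ} {p : ℝ} (h0 : 0 ≤ p) (h1 : p ≤ 1) {ι : Type*} (s : Finset ι)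
    (A : ι → SimpleGraph (Fin n) → Prop) :
    gnpProb n p (fun G => ∃ i ∈ s, A i G) ≤ ∑ i ∈ s, gnpProb n p (A i) := by
  unfold gnpProb
  rw [Finset.sum_comm]
  apply Finset.sum_le_sum
  intro G _
  have hw := gnpWeight_nonneg h0 h1 G
  have hn : ∀ i ∈ s, 0 ≤ (if A i G then gnpWeight n p G else 0) := by
    intro i _; split_ifs <;> simp [hw]
  split_ifs with h
  · obtain ⟨i, hi, hA⟩ := h
    refine le_trans ?_ (Finset.single_le_sum hn hi)
    simp [hA]
  · exact Finset.sum_nonneg hn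

lemma gnpProb_or {n : ℕ} {p : ℝ} (h0 : 0 ≤ p) (h1 : p ≤ 1)
    (A B : SimpleGraph (Fin n) → Prop) :
    gnpProb n p (fun G => A G ∨ B G) ≤ gnpProb n p A + gnpProb n p B := by
  unfold gnpProb
  rw [← Finset.sum_add_distrib]
  apply Finset.sum_le_sum
  intro G _
  have hw := gnpWeight_nonneg h0 h1 G
  by_cases hA : A G <;> by_cases hB : B G <;> simp [hA, hB, hw]

/-- Master first-moment bound. -/
lemma gnpProb_master {n : ℕ} {p : ℝ} (h0 : 0 ≤ p) (h1 : p ≤ 1)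
    (A : SimpleGraph (Fin n) → Prop) (a b : Sym2 (Fin n) → ℝ) (C : ℝ) (hC : 0 ≤ C)
    (ha : ∀ e, 0 ≤ a e) (hb : ∀ e, 0 ≤ b e)
    (h : ∀ G, A G → 1 ≤ C * ∏ e ∈ allE n, (if e ∈ G.edgeSet then a e else b e)) :
    gnpProb n p A ≤ C * ∏ e ∈ allE n, (p * a e + (1 - p) * b e) := by
  rw [← sum_graphs_prod, Finset.mul_sum, gnpProb]
  apply Finset.sum_le_sum
  intro G _
  have hq : 0 ≤ 1 - p := by linarith
  have e1 : ∏ e ∈ allE n, (if e ∈ G.edgeSet then p * a e else (1 - p) * b e)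
      = gnpWeight n p G * ∏ e ∈ allE n, (if e ∈ G.edgeSet then a e else b e) := by
    rw [gnpWeight_eq, ← Finset.prod_mul_distrib]
    apply Finset.prod_congr rfl
    intro e _
    split_ifs <;> rfl
  rw [e1]
  have hw := gnpWeight_nonneg h0 h1 G
  have hp : 0 ≤ ∏ e ∈ allE n, (if e ∈ G.edgeSet then a e else b e) := by
    apply Finset.prod_nonneg
    intro e _
    split_ifs <;> simp [ha, hb]
  split_ifs with hA
  · have := h G hA
    calc gnpWeight n p G = gnpWeight n p G * 1 := by ring
      _ ≤ gnpWeight n p G * (C * ∏ e ∈ allE n, (if e ∈ G.edgeSet then a e else b e)) := by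
        gcongr
      _ = _ := by ring
  · positivity

/-- Exponential-moment bound with weights `c`. -/
lemma gnpProb_exp {n : ℕ} {p : ℝ} (h0 : 0 ≤ p) (h1 : p ≤ 1)
    (A : SimpleGraph (Fin n) → Prop) (c : Sym2 (Fin n) → ℝ) (t : ℝ)
    (h : ∀ G : SimpleGraph (Fin n), A G → t ≤ ∑ e ∈ allE n, (if e ∈ G.edgeSet then c e else 0)) :
    gnpProb n p A ≤ Real.exp (-t + p * ∑ e ∈ allE n, (Real.exp (c e) - 1)) := by
  refine (gnpProb_master h0 h1 A (fun e => Real.exp (c e)) (fun _ => 1) (Real.exp (-t))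
    (Real.exp_nonneg _) (fun _ => Real.exp_nonneg _) (fun _ => zero_le_one) ?_).trans ?_
  · intro G hG
    have e1 : ∏ e ∈ allE n, (if e ∈ G.edgeSet then Real.exp (c e) else 1)
        = Real.exp (∑ e ∈ allE n, (if e ∈ G.edgeSet then c e else 0)) := by
      rw [Real.exp_sum]
      apply Finset.prod_congr rfl
      intro e _
      split_ifs <;> simp
    rw [e1, ← Real.exp_add]
    apply Real.one_le_exp
    linarith [h G hG]
  · rw [Real.exp_add, Finset.mul_sum, Real.exp_sum]
    apply mul_le_mul_of_nonneg_left _ (Real.exp_nonneg _)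
    apply Finset.prod_le_prod
    · intro e _
      have := Real.exp_nonneg (c e)
      have : 0 ≤ 1 - p := by linarith
      positivity
    · intro e _
      have := Real.add_one_le_exp (p * (Real.exp (c e) - 1))
      linarith

lemma whp_of_bad {p : ℕ → ℝ} (h0 : ∀ n, 0 ≤ p n) (h1 : ∀ n, p n ≤ 1)
    {A : ∀ n : ℕ, SimpleGraph (Fin n) → Prop} (B : ℕ → ℝ) (hB : Tendsto B atTop (nhds 0))
    (h : ∀ᶠ n in atTop, gnpProb n (p n) (fun G => ¬ A n G) ≤ B n) : WHP p A := by
  unfold WHP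
  have e : (fun n => gnpProb n (p n) (A n))
      = fun n => 1 - gnpProb n (p n) (fun G => ¬ A n G) := by
    funext n; exact gnpProb_compl _ _ _
  rw [e]
  have : Tendsto (fun n => gnpProb n (p n) (fun G => ¬ A n G)) atTop (nhds 0) :=
    squeeze_zero' (Eventually.of_forall fun n => gnpProb_nonneg (h0 n) (h1 n) _) h hB
  simpa using this.const_sub 1

lemma bad_of_whp {p : ℕ → ℝ}
    {A : ∀ n : ℕ, SimpleGraph (Fin n) → Prop} (h : WHP p A) :
    Tendsto (fun n => gnpProb n (p n) (fun G => ¬ A n G)) atTop (nhds 0) := by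
  have e : (fun n => gnpProb n (p n) (fun G => ¬ A n G))
      = fun n => 1 - gnpProb n (p n) (A n) := by
    funext n; rw [gnpProb_compl n (p n) (A n)]; ring
  rw [e]
  unfold WHP at h
  simpa using h.const_sub 1

lemma WHP.and {p : ℕ → ℝ} (h0 : ∀ n, 0 ≤ p n) (h1 : ∀ n, p n ≤ 1)
    {A B : ∀ n : ℕ, SimpleGraph (Fin n) → Prop} (hA : WHP p A) (hB : WHP p B) :
    WHP p (fun n G => A n G ∧ B n G) := by
  refine whp_of_bad h0 h1 _ (by simpa using (bad_of_whp hA).add (bad_of_whp hB)) ?_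
  refine Eventually.of_forall fun n => ?_
  refine le_trans (gnpProb_mono (h0 n) (h1 n) ?_) (gnpProb_or (h0 n) (h1 n) _ _)
  intro G h
  tauto

lemma WHP.mono {p : ℕ → ℝ} (h0 : ∀ n, 0 ≤ p n) (h1 : ∀ n, p n ≤ 1)
    {A B : ∀ n : ℕ, SimpleGraph (Fin n) → Prop} (hA : WHP p A)
    (h : ∀ᶠ n in atTop, ∀ G, A n G → B n G) : WHP p B := by
  refine whp_of_bad h0 h1 _ (bad_of_whp hA) ?_
  filter_upwards [h] with n hn
  exact gnpProb_mono (h0 n) (h1 n) fun G h h' => h (hn G h')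

lemma choose_le_exp (n s : ℕ) (hs : 0 < s) :
    (n.choose s : ℝ) ≤ (Real.exp 1 * n / s) ^ s := by
  have h1 : (n.choose s : ℝ) ≤ (n : ℝ) ^ s / (s.factorial : ℝ) := Nat.choose_le_pow_div s n
  have h2 : (s : ℝ) ^ s / (s.factorial : ℝ) ≤ Real.exp s :=
    Real.pow_div_factorial_le_exp (s : ℝ) (by positivity) s
  have hs' : (0 : ℝ) < s := by exact_mod_cast hs
  have hf : (0 : ℝ) < s.factorial := by exact_mod_cast s.factorial_pos
  refine h1.trans ?_
  rw [div_pow, mul_pow, ← Real.exp_nat_mul, mul_one, div_le_div_iff₀ hf (by positivity)]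
  rw [div_le_iff₀ hf] at h2
  have : (0 : ℝ) ≤ (n : ℝ) ^ s := by positivity
  nlinarith [mul_le_mul_of_nonneg_left h2 this]

lemma dense_one {n : ℕ} {p : ℝ} (h0 : 0 < p) (h1 : p ≤ 1) (m : ℝ) (hm : 0 < m)
    (W : Finset (Fin n)) (hW : 0 < W.card) (hx : p * W.card ≤ m) :
    gnpProb n p (fun G => m * W.card ≤ (eIn G W : ℝ)) ≤
      (Real.exp 1 * p * W.card / m) ^ (m * (W.card : ℝ)) := by
  set s : ℝ := (W.card : ℝ) with hs
  have hs0 : 0 < s := by rw [hs]; exact_mod_cast hW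
  set l : ℝ := Real.log (m / (p * s)) with hl
  have hl0 : 0 ≤ l := Real.log_nonneg (by rw [le_div_iff₀ (by positivity)]; linarith)
  have hel : Real.exp l = m / (p * s) := Real.exp_log (by positivity)
  refine (gnpProb_exp h0.le h1 _ (fun e => if (∀ v ∈ e, v ∈ W) then l else 0) (l * (m * s)) ?_).trans ?_
  · intro G hG
    have : ∑ e ∈ allE n, (if e ∈ G.edgeSet then (if (∀ v ∈ e, v ∈ W) then l else 0) else 0)
        = (eIn G W : ℝ) * l := by
      rw [eIn, ← nsmul_eq_mul, ← Finset.sum_const, ← Finset.sum_filter, ← Finset.sum_filter]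
      apply Finset.sum_congr _ (fun _ _ => rfl)
      ext e
      simp only [Finset.mem_filter, SimpleGraph.mem_edgeFinset]
      constructor
      · rintro ⟨⟨_, h⟩, h'⟩; exact ⟨h, h'⟩
      · rintro ⟨h, h'⟩; exact ⟨⟨edgeSet_subset_allE G h, h⟩, h'⟩
    rw [this, mul_comm]
    gcongr
  · have hsum : ∑ e ∈ allE n, (Real.exp (if (∀ v ∈ e, v ∈ W) then l else 0) - 1)
        ≤ s ^ 2 * (Real.exp l - 1) := by
      have e1 : ∀ e ∈ allE n, (Real.exp (if (∀ v ∈ e, v ∈ W) then l else 0) - 1)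
          = if (∀ v ∈ e, v ∈ W) then (Real.exp l - 1) else 0 := by
        intro e _; split_ifs <;> simp
      rw [Finset.sum_congr rfl e1, ← Finset.sum_filter, Finset.sum_const, nsmul_eq_mul]
      apply mul_le_mul_of_nonneg_right
      · have hsub : (allE n).filter (fun e => ∀ v ∈ e, v ∈ W) ⊆ W.sym2 := by
          intro e he
          rw [Finset.mem_filter] at he
          rw [Finset.mem_sym2_iff]; exact he.2
        have hc := Finset.card_le_card hsub
        rw [Finset.card_sym2] at hc
        have h3 : (W.card + 1).choose 2 ≤ W.card ^ 2 := by
          rw [Nat.choose_two_right]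
          apply Nat.div_le_of_le_mul
          simp only [Nat.add_sub_cancel]
          nlinarith
        rw [hs]
        exact_mod_cast hc.trans h3
      · have := Real.add_one_le_exp l; linarith
    have hps : 0 < p * s := by positivity
    have h4 : p * (s ^ 2 * (Real.exp l - 1)) ≤ m * s := by
      rw [hel]
      have : p * (s ^ 2 * (m / (p * s) - 1)) = m * s - p * s ^ 2 := by
        field_simp
      rw [this]; have : 0 ≤ p * s ^ 2 := by positivity
      linarith
    have h5 : Real.exp 1 * p * s / m = Real.exp (1 - l) := by
      rw [Real.exp_sub, hel]; field_simp
    rw [h5, ← Real.exp_mul]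
    apply Real.exp_le_exp.2
    have := mul_le_mul_of_nonneg_left hsum h0.le
    nlinarith

lemma geom_aux (η : ℝ) (h0 : 0 ≤ η) (h1 : η ≤ 1 / 2) (n : ℕ) :
    ∑ s ∈ Finset.Icc 1 n, η ^ s ≤ 2 * η := by
  have : ∀ n : ℕ, ∑ s ∈ Finset.Icc 1 n, η ^ s ≤ 2 * η - η ^ (n + 1) * 2 := by
    intro n
    induction n with
    | zero => simp; linarith
    | succ k ih =>
      rw [Finset.sum_Icc_succ_top (by omega)]
      have : η ^ (k + 1 + 1) = η ^ (k + 1) * η := pow_succ _ _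
      rw [this]
      have h3 : 0 ≤ η ^ (k + 1) := by positivity
      nlinarith
  refine (this n).trans ?_
  have h3 : 0 ≤ η ^ (n + 1) := by positivity
  linarith

lemma dense_bound {n : ℕ} {p : ℝ} (hn : 0 < n) (h0 : 0 < p) (h1 : p ≤ 1) (m s0 : ℝ) (hm : 1 ≤ m)
    (hs0 : 0 ≤ s0)
    (hx : Real.exp 1 * p * s0 / m ≤ 1)
    (hη : Real.exp 1 ^ 2 * (n * p) / m * (Real.exp 1 * p * s0 / m) ^ (m - 1) ≤ 1 / 2) :
    gnpProb n p (fun G => ∃ W : Finset (Fin n), 0 < W.card ∧ (W.card : ℝ) ≤ s0 ∧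
      m * W.card ≤ (eIn G W : ℝ)) ≤
      2 * (Real.exp 1 ^ 2 * (n * p) / m * (Real.exp 1 * p * s0 / m) ^ (m - 1)) := by
  set η := Real.exp 1 ^ 2 * (n * p) / m * (Real.exp 1 * p * s0 / m) ^ (m - 1) with hηd
  have hm0 : 0 < m := by linarith
  have hE : (1 : ℝ) ≤ Real.exp 1 := Real.one_le_exp (by norm_num)
  have hx0 : 0 ≤ Real.exp 1 * p * s0 / m := by positivity
  have hη0 : 0 ≤ η := by rw [hηd]; positivity
  have hn' : (0 : ℝ) < n := by exact_mod_cast hn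
  have step : ∀ W : Finset (Fin n), 0 < W.card →
      gnpProb n p (fun G => (W.card : ℝ) ≤ s0 ∧ m * W.card ≤ (eIn G W : ℝ)) ≤
        (η * W.card / (Real.exp 1 * n)) ^ W.card := by
    intro W hW
    have hs : (0 : ℝ) < W.card := by exact_mod_cast hW
    by_cases hc : (W.card : ℝ) ≤ s0
    · refine (gnpProb_mono h0.le h1 (B := fun G => m * W.card ≤ (eIn G W : ℝ))
        (fun G h => h.2)).trans ?_
      have hle : Real.exp 1 * p * W.card / m ≤ Real.exp 1 * p * s0 / m := by gcongr
      refine (dense_one h0 h1 m hm0 W hW ?_).trans ?_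
      · have : Real.exp 1 * p * W.card / m ≤ 1 := hle.trans hx
        rw [div_le_one hm0] at this
        have h2 : 0 < p * W.card := by positivity
        nlinarith
      · rw [Real.rpow_mul (by positivity), Real.rpow_natCast]
        apply pow_le_pow_left₀ (by positivity)
        have hy : 0 < Real.exp 1 * p * W.card / m := by positivity
        have : (Real.exp 1 * p * W.card / m) ^ m
            = (Real.exp 1 * p * W.card / m) * (Real.exp 1 * p * W.card / m) ^ (m - 1) := by
          rw [Real.rpow_sub_one hy.ne']; field_simp
        rw [this]
        have h3 : (Real.exp 1 * p * W.card / m) ^ (m - 1)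
            ≤ (Real.exp 1 * p * s0 / m) ^ (m - 1) :=
          Real.rpow_le_rpow hy.le hle (by linarith)
        calc _ ≤ (Real.exp 1 * p * W.card / m) * (Real.exp 1 * p * s0 / m) ^ (m - 1) := by gcongr
          _ = η * W.card / (Real.exp 1 * n) := by rw [hηd]; field_simp
    · have : gnpProb n p (fun G => (W.card : ℝ) ≤ s0 ∧ m * W.card ≤ (eIn G W : ℝ)) = 0 := by
        simp [gnpProb, hc]
      rw [this]; positivity
  have hU : gnpProb n p (fun G => ∃ W : Finset (Fin n), 0 < W.card ∧ (W.card : ℝ) ≤ s0 ∧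
      m * W.card ≤ (eIn G W : ℝ)) ≤ ∑ s ∈ Finset.Icc 1 n,
        ∑ W ∈ Finset.powersetCard s (Finset.univ : Finset (Fin n)),
          (η * s / (Real.exp 1 * n)) ^ s := by
    refine (gnpProb_mono h0.le h1 (B := fun G => ∃ s ∈ Finset.Icc 1 n,
      ∃ W ∈ Finset.powersetCard s (Finset.univ : Finset (Fin n)),
      ((W.card : ℝ) ≤ s0 ∧ m * W.card ≤ (eIn G W : ℝ))) ?_).trans ?_
    · rintro G ⟨W, hW, h2⟩
      refine ⟨W.card, ?_, W, ?_, h2⟩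
      · rw [Finset.mem_Icc]; exact ⟨hW, by simpa using Finset.card_le_univ W⟩
      · simp
    · refine (gnpProb_union h0.le h1 _ _).trans ?_
      apply Finset.sum_le_sum
      intro s hs
      refine (gnpProb_union h0.le h1 _ _).trans ?_
      apply Finset.sum_le_sum
      intro W hW
      rw [Finset.mem_powersetCard] at hW
      rw [Finset.mem_Icc] at hs
      have := step W (by omega)
      rw [hW.2] at this
      rw [hW.2]
      exact this
  refine hU.trans ((Finset.sum_le_sum ?_).trans (geom_aux η hη0 hη n))
  intro s hs
  rw [Finset.mem_Icc] at hs
  rw [Finset.sum_const, Finset.card_powersetCard, Finset.card_univ, Fintype.card_fin, nsmul_eq_mul]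
  have hs' : (0 : ℝ) < s := by exact_mod_cast hs.1
  calc (n.choose s : ℝ) * (η * s / (Real.exp 1 * n)) ^ s
      ≤ (Real.exp 1 * n / s) ^ s * (η * s / (Real.exp 1 * n)) ^ s := by
        gcongr; exact choose_le_exp n s hs.1
    _ = η ^ s := by
        rw [← mul_pow]; congr 1; field_simp

/-- lower tail between disjoint sets -/
lemma cut_one {n : ℕ} {p : ℝ} (h0 : 0 ≤ p) (h1 : p ≤ 1) (δ : ℝ) (hδ : 0 < δ) (hδ1 : δ ≤ 1)
    (U Z : Finset (Fin n)) (hUZ : Disjoint U Z) :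
    gnpProb n p (fun G => (eBetween G U Z : ℝ) ≤ (1 - δ) * (U.card * Z.card * p)) ≤
      Real.exp (-(δ ^ 2 / 2) * (U.card * Z.card * p)) := by
  set S : Finset (Sym2 (Fin n)) := (U ×ˢ Z).image (fun q => s(q.1, q.2)) with hS
  have hinj : Set.InjOn (fun q : Fin n × Fin n => s(q.1, q.2)) (U ×ˢ Z : Finset _) := by
    rintro ⟨a, b⟩ h ⟨a', b'⟩ h' heq
    simp only [Finset.coe_product, Set.mem_prod, Finset.mem_coe] at h h'
    simp only [Sym2.eq_iff] at heq
    rcases heq with ⟨rfl, rfl⟩ | ⟨rfl, rfl⟩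
    · rfl
    · exact absurd h'.2 (Finset.disjoint_left.1 hUZ h.1)
  have hcard : (S.card : ℝ) = U.card * Z.card := by
    rw [hS, Finset.card_image_of_injOn hinj, Finset.card_product]; push_cast; rfl
  have hSE : S ⊆ allE n := by
    intro e he
    rw [hS, Finset.mem_image] at he
    obtain ⟨⟨a, b⟩, hab, rfl⟩ := he
    rw [Finset.mem_product] at hab
    rw [mem_allE, Sym2.mk_isDiag_iff]
    rintro h
    simp only at h hab
    exact Finset.disjoint_left.1 hUZ hab.1 (h ▸ hab.2)
  refine (gnpProb_exp h0 h1 _ (fun e => if e ∈ S then -δ else 0)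
    (-δ * ((1 - δ) * (U.card * Z.card * p))) ?_).trans ?_
  · intro G hG
    have : ∑ e ∈ allE n, (if e ∈ G.edgeSet then (if e ∈ S then -δ else 0) else 0)
        = (eBetween G U Z : ℝ) * (-δ) := by
      have : eBetween G U Z = (S.filter (fun e => e ∈ G.edgeSet)).card := by
        rw [eBetween, hS, Finset.filter_image, Finset.card_image_of_injOn]
        · rfl
        · exact hinj.mono (by intro x hx; simp at hx ⊢; exact hx.1)
      rw [this, ← nsmul_eq_mul, ← Finset.sum_const, ← Finset.sum_filter, ← Finset.sum_filter]
      apply Finset.sum_congr _ (fun _ _ => rfl)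
      ext e
      simp only [Finset.mem_filter]
      constructor
      · rintro ⟨⟨_, h⟩, h'⟩; exact ⟨h', h⟩
      · rintro ⟨h, h'⟩; exact ⟨⟨hSE h, h'⟩, h⟩
    rw [this]
    nlinarith
  · have hsum : ∑ e ∈ allE n, (Real.exp (if e ∈ S then -δ else 0) - 1)
        = (U.card * Z.card) * (Real.exp (-δ) - 1) := by
      have e1 : ∀ e ∈ allE n, (Real.exp (if e ∈ S then -δ else 0) - 1)
          = if e ∈ S then (Real.exp (-δ) - 1) else 0 := by
        intro e _; split_ifs <;> simp
      rw [Finset.sum_congr rfl e1, ← Finset.sum_filter, Finset.sum_const, nsmul_eq_mul,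
        ← hcard]
      congr 3
      ext e; simp only [Finset.mem_filter]; exact ⟨fun h => h.2, fun h => ⟨hSE h, h⟩⟩
    rw [hsum]
    apply Real.exp_le_exp.2
    have hexp : Real.exp (-δ) ≤ 1 - δ + δ ^ 2 / 2 := by
      have hb := Real.quadratic_le_exp_of_nonneg hδ.le
      rw [Real.exp_neg, inv_le_comm₀ (Real.exp_pos _) (by nlinarith)]
      refine le_trans ?_ hb
      rw [inv_le_iff_one_le_mul₀ (by nlinarith)]
      nlinarith [sq_nonneg δ, sq_nonneg (δ ^ 2)]
    have hM : (0 : ℝ) ≤ U.card * Z.card * p := by positivity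
    nlinarith [mul_le_mul_of_nonneg_left hexp hM]

lemma cut_bound {n : ℕ} {p : ℝ} (h0 : 0 ≤ p) (h1 : p ≤ 1) (δ θ : ℝ) (hδ : 0 < δ) (hδ1 : δ ≤ 1) :
    gnpProb n p (fun G => ∃ U Z : Finset (Fin n), Disjoint U Z ∧
      θ * (n : ℝ) ^ 2 ≤ U.card * Z.card ∧
      (eBetween G U Z : ℝ) ≤ (1 - δ) * (U.card * Z.card * p)) ≤
      4 ^ n * Real.exp (-(δ ^ 2 / 2) * (θ * n ^ 2 * p)) := by
  refine (gnpProb_mono h0 h1 (B := fun G => ∃ q ∈ (Finset.univ : Finset (Finset (Fin n) × Finset (Fin n))),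
    (Disjoint q.1 q.2 ∧ θ * (n : ℝ) ^ 2 ≤ q.1.card * q.2.card ∧
      (eBetween G q.1 q.2 : ℝ) ≤ (1 - δ) * (q.1.card * q.2.card * p))) ?_).trans ?_
  · rintro G ⟨U, Z, h⟩; exact ⟨(U, Z), Finset.mem_univ _, h⟩
  refine (gnpProb_union h0 h1 _ _).trans ?_
  refine (Finset.sum_le_sum (g := fun _ => Real.exp (-(δ ^ 2 / 2) * (θ * n ^ 2 * p))) ?_).trans ?_
  · rintro ⟨U, Z⟩ _
    by_cases h : Disjoint U Z ∧ θ * (n : ℝ) ^ 2 ≤ U.card * Z.card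
    · refine (gnpProb_mono h0 h1 (fun G hG => hG.2.2)).trans
        ((cut_one h0 h1 δ hδ hδ1 U Z h.1).trans ?_)
      apply Real.exp_le_exp.2
      have := mul_le_mul_of_nonneg_right h.2 h0
      have h3 : 0 < δ ^ 2 := by positivity
      nlinarith
    · have : gnpProb n p (fun G => Disjoint U Z ∧ θ * (n : ℝ) ^ 2 ≤ U.card * Z.card ∧
          (eBetween G U Z : ℝ) ≤ (1 - δ) * (U.card * Z.card * p)) = 0 := by
        apply Finset.sum_eq_zero
        intro G _
        rw [if_neg]; tauto
      simp only [this]; positivity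
  · rw [Finset.sum_const, Finset.card_univ, nsmul_eq_mul, Fintype.card_prod, Fintype.card_finset,
      Fintype.card_fin]
    push_cast
    rw [← mul_pow]; norm_num

lemma sum_incident {n : ℕ} (G : SimpleGraph (Fin n)) (U : Finset (Fin n)) (c : ℝ) :
    ∑ e ∈ allE n, (if e ∈ G.edgeSet then c * ((U.filter (fun u => u ∈ e)).card : ℝ) else 0)
      = c * ∑ u ∈ U, (G.degree u : ℝ) := by
  rw [← Finset.sum_filter, ← Finset.mul_sum]
  congr 1
  have h1 : ∀ e : Sym2 (Fin n), ((U.filter (fun u => u ∈ e)).card : ℝ)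
      = ∑ u ∈ U, if u ∈ e then 1 else 0 := by
    intro e; rw [Finset.sum_boole]
  simp_rw [h1]
  rw [Finset.sum_comm]
  apply Finset.sum_congr rfl
  intro u _
  rw [Finset.sum_boole, ← SimpleGraph.card_incidenceFinset_eq_degree]
  congr 2
  ext e
  simp only [Finset.mem_filter, SimpleGraph.mem_incidenceFinset, SimpleGraph.incidenceSet,
    Set.mem_ofPred_eq]
  constructor
  · rintro ⟨⟨_, h⟩, h'⟩; exact ⟨h, h'⟩
  · rintro ⟨h, h'⟩; exact ⟨⟨edgeSet_subset_allE G h, h⟩, h'⟩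

lemma degsum_one {n : ℕ} {p : ℝ} (h0 : 0 ≤ p) (h1 : p ≤ 1) (δ : ℝ) (hδ : 0 < δ) (hδ1 : δ ≤ 1)
    (U : Finset (Fin n)) :
    gnpProb n p (fun G => (1 + δ) * (U.card * (n * p)) ≤ ∑ u ∈ U, (G.degree u : ℝ)) ≤
      Real.exp (-(δ ^ 2 / 8) * (U.card * (n * p))) := by
  refine (gnpProb_exp h0 h1 _ (fun e => (δ / 4) * ((U.filter (fun u => u ∈ e)).card : ℝ))
    (δ / 4 * ((1 + δ) * (U.card * (n * p)))) ?_).trans ?_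
  · intro G hG
    have := sum_incident G U (δ / 4)
    rw [this]; gcongr
  · apply Real.exp_le_exp.2
    have hc : ∀ e ∈ allE n, Real.exp ((δ / 4) * ((U.filter (fun u => u ∈ e)).card : ℝ)) - 1
        ≤ (δ / 4 * (1 + δ / 2)) * ((U.filter (fun u => u ∈ e)).card : ℝ) := by
      intro e he
      have h2 : (U.filter (fun u => u ∈ e)).card ≤ 2 := by
        induction e using Sym2.ind with
        | _ a b =>
          refine (Finset.card_le_card (t := {a, b}) ?_).trans Finset.card_le_two
          intro u hu
          simpa using (Finset.mem_filter.1 hu).2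
      have h2' : ((U.filter (fun u => u ∈ e)).card : ℝ) ≤ 2 := by exact_mod_cast h2
      set k : ℝ := ((U.filter (fun u => u ∈ e)).card : ℝ)
      have hk : 0 ≤ k := by positivity
      have hx : |δ / 4 * k| ≤ 1 := by
        rw [abs_of_nonneg (by positivity)]; nlinarith
      have := Real.abs_exp_sub_one_sub_id_le hx
      have := (abs_le.1 this).2
      have h5 : (δ / 4 * k) ^ 2 ≤ (δ / 4 * k) * (δ / 2) := by
        rw [sq]; apply mul_le_mul_of_nonneg_left _ (by positivity); nlinarith
      nlinarith
    have hs := Finset.sum_le_sum hc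
    rw [← Finset.mul_sum] at hs
    obtain ⟨T, hT⟩ : ∃ T : SimpleGraph (Fin n), T = ⊤ := ⟨_, rfl⟩
    have htop := sum_incident T U 1
    have e2 : ∑ e ∈ allE n, ((U.filter (fun u => u ∈ e)).card : ℝ) ≤ U.card * n := by
      have e3 : ∑ e ∈ allE n, (if e ∈ T.edgeSet then
          1 * ((U.filter (fun u => u ∈ e)).card : ℝ) else 0)
          = ∑ e ∈ allE n, ((U.filter (fun u => u ∈ e)).card : ℝ) := by
        apply Finset.sum_congr rfl
        intro e he
        rw [if_pos, one_mul]
        have := mem_allE.1 he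
        induction e using Sym2.ind with
        | _ a b => simpa [hT] using this
      rw [← e3, htop, one_mul]
      have : ∀ u ∈ U, ((T.degree u : ℕ) : ℝ) ≤ n := by
        intro u _
        have := T.degree_lt_card_verts u
        rw [Fintype.card_fin] at this
        exact_mod_cast this.le
      refine (Finset.sum_le_sum this).trans ?_
      simp
    have h6 : ∑ e ∈ allE n, (Real.exp ((δ / 4) * ((U.filter (fun u => u ∈ e)).card : ℝ)) - 1)
        ≤ (δ / 4 * (1 + δ / 2)) * (U.card * n) :=
      hs.trans (mul_le_mul_of_nonneg_left e2 (by positivity))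
    have h7 := mul_le_mul_of_nonneg_left h6 h0
    nlinarith

lemma degsum_bound {n : ℕ} {p : ℝ} (h0 : 0 ≤ p) (h1 : p ≤ 1) (δ θ : ℝ) (hδ : 0 < δ) (hδ1 : δ ≤ 1) :
    gnpProb n p (fun G => ∃ U : Finset (Fin n), θ * n ≤ U.card ∧
      (1 + δ) * (U.card * (n * p)) ≤ ∑ u ∈ U, (G.degree u : ℝ)) ≤
      2 ^ n * Real.exp (-(δ ^ 2 / 8) * (θ * n * (n * p))) := by
  refine (gnpProb_mono h0 h1 (B := fun G => ∃ U ∈ (Finset.univ : Finset (Finset (Fin n))),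
    (θ * n ≤ U.card ∧
      (1 + δ) * (U.card * (n * p)) ≤ ∑ u ∈ U, (G.degree u : ℝ))) ?_).trans ?_
  · rintro G ⟨U, h⟩; exact ⟨U, Finset.mem_univ _, h⟩
  refine (gnpProb_union h0 h1 _ _).trans ?_
  refine (Finset.sum_le_sum (g := fun _ => Real.exp (-(δ ^ 2 / 8) * (θ * n * (n * p)))) ?_).trans ?_
  · rintro U _
    by_cases h : θ * n ≤ U.card
    · refine (gnpProb_mono h0 h1 (fun G hG => hG.2)).trans
        ((degsum_one h0 h1 δ hδ hδ1 U).trans ?_)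
      apply Real.exp_le_exp.2
      have hnp : 0 ≤ n * p := by positivity
      have := mul_le_mul_of_nonneg_right h hnp
      have h3 : 0 < δ ^ 2 := by positivity
      nlinarith
    · have : gnpProb n p (fun G => θ * n ≤ U.card ∧
          (1 + δ) * (U.card * (n * p)) ≤ ∑ u ∈ U, (G.degree u : ℝ)) = 0 := by
        apply Finset.sum_eq_zero
        intro G _
        rw [if_neg]; tauto
      simp only [this]; positivity
  · rw [Finset.sum_const, Finset.card_univ, nsmul_eq_mul, Fintype.card_finset,
      Fintype.card_fin]
    push_cast
    rfl

lemma lowdeg_bound {n : ℕ} {p : ℝ} (h0 : 0 ≤ p) (h1 : p ≤ 1) (P : Finset (Sym2 (Fin n)))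
    (hP : P ⊆ allE n) (X : Finset (Fin n)) (t : ℝ) :
    gnpProb n p (fun G => (∀ e ∈ P, e ∈ G.edgeSet) ∧ ∀ u ∈ X, (G.degree u : ℝ) < t) ≤
      p ^ P.card * Real.exp (Real.log 128 * (X.card * t) - (127 / 128) * p *
        (((allE n).filter (fun e => (∃ u ∈ X, u ∈ e) ∧ e ∉ P)).card : ℝ)) := by
  set S := (allE n).filter (fun e => (∃ u ∈ X, u ∈ e) ∧ e ∉ P) with hS
  have hl : 0 < Real.log 128 := Real.log_pos (by norm_num)
  refine (gnpProb_master h0 h1 _ (fun e => if e ∈ S then 1 / 128 else 1)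
    (fun e => if e ∈ P then 0 else 1) (Real.exp (Real.log 128 * (X.card * t)))
    (Real.exp_nonneg _) ?_ ?_ ?_).trans ?_
  · intro e; split_ifs <;> norm_num
  · intro e; split_ifs <;> norm_num
  · rintro G ⟨hPG, hX⟩
    have e1 : ∏ e ∈ allE n, (if e ∈ G.edgeSet then (if e ∈ S then (1 / 128 : ℝ) else 1)
        else (if e ∈ P then 0 else 1))
        = (1 / 128 : ℝ) ^ (S.filter (fun e => e ∈ G.edgeSet)).card := by
      have : ∀ e ∈ allE n, (if e ∈ G.edgeSet then (if e ∈ S then (1 / 128 : ℝ) else 1)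
        else (if e ∈ P then 0 else 1)) = if (e ∈ S ∧ e ∈ G.edgeSet) then (1 / 128 : ℝ) else 1 := by
        intro e _
        by_cases hG : e ∈ G.edgeSet
        · simp [hG]
        · have : e ∉ P := fun h => hG (hPG e h)
          simp [hG, this]
      rw [Finset.prod_congr rfl this, ← Finset.prod_filter, Finset.prod_const]
      congr 2
      ext e
      simp only [Finset.mem_filter]
      constructor
      · rintro ⟨_, h⟩; exact h
      · rintro h; exact ⟨(Finset.mem_filter.1 h.1).1, h⟩
    rw [e1]
    have hcard : ((S.filter (fun e => e ∈ G.edgeSet)).card : ℝ) ≤ X.card * t := by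
      have hsub : S.filter (fun e => e ∈ G.edgeSet) ⊆ X.biUnion (fun u => G.incidenceFinset u) := by
        intro e he
        rw [Finset.mem_filter, hS, Finset.mem_filter] at he
        obtain ⟨⟨_, ⟨u, hu, hue⟩, _⟩, heG⟩ := he
        rw [Finset.mem_biUnion]
        refine ⟨u, hu, ?_⟩
        rw [SimpleGraph.mem_incidenceFinset]
        exact ⟨heG, hue⟩
      have h3 := (Finset.card_le_card hsub).trans Finset.card_biUnion_le
      have h4 : ((S.filter (fun e => e ∈ G.edgeSet)).card : ℝ) ≤ ∑ u ∈ X, (G.degree u : ℝ) := by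
        simp_rw [SimpleGraph.card_incidenceFinset_eq_degree] at h3
        exact_mod_cast h3
      refine h4.trans ((Finset.sum_le_sum (g := fun _ => t) (fun u hu => (hX u hu).le)).trans ?_)
      simp
    have : (1 / 128 : ℝ) ^ (S.filter (fun e => e ∈ G.edgeSet)).card
        = Real.exp (-(Real.log 128 * ((S.filter (fun e => e ∈ G.edgeSet)).card : ℝ))) := by
      rw [one_div, inv_pow, Real.exp_neg, mul_comm, Real.exp_nat_mul, Real.exp_log (by norm_num)]
    rw [this, ← Real.exp_add]
    apply Real.one_le_exp
    nlinarith
  · have hdisj : Disjoint P S := by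
      rw [Finset.disjoint_left]; intro e he heS
      exact (Finset.mem_filter.1 heS).2.2 he
    have e2 : ∏ e ∈ allE n, (p * (if e ∈ S then (1 / 128 : ℝ) else 1) +
        (1 - p) * (if e ∈ P then 0 else 1)) = p ^ P.card * (1 - (127 / 128) * p) ^ S.card := by
      have : ∀ e ∈ allE n, (p * (if e ∈ S then (1 / 128 : ℝ) else 1) +
        (1 - p) * (if e ∈ P then 0 else 1)) =
          (if e ∈ P then p else 1) * (if e ∈ S then 1 - (127 / 128) * p else 1) := by
        intro e _
        by_cases hp : e ∈ P
        · have : e ∉ S := Finset.disjoint_left.1 hdisj hp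
          simp [hp, this]
        · by_cases hs : e ∈ S
          · simp [hp, hs]; ring
          · simp [hp, hs]
      rw [Finset.prod_congr rfl this, Finset.prod_mul_distrib, ← Finset.prod_filter,
        ← Finset.prod_filter, Finset.prod_const, Finset.prod_const]
      congr 3
      · ext e; simp only [Finset.mem_filter]; exact ⟨fun h => h.2, fun h => ⟨hP h, h⟩⟩
      · ext e; simp only [Finset.mem_filter]
        exact ⟨fun h => h.2, fun h => ⟨(Finset.mem_filter.1 h).1, h⟩⟩
    rw [e2]
    have e3 : (1 - (127 / 128) * p) ^ S.card ≤ Real.exp (-((127 / 128) * p * S.card)) := by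
      have := Real.add_one_le_exp (-((127 / 128) * p))
      calc (1 - (127 / 128) * p) ^ S.card ≤ (Real.exp (-((127 / 128) * p))) ^ S.card := by
            apply pow_le_pow_left₀ <;> linarith
        _ = _ := by rw [← Real.exp_nat_mul]; congr 1; ring
    rw [sub_eq_add_neg (Real.log 128 * (X.card * t)), Real.exp_add]
    have hpp : 0 ≤ p ^ P.card := by positivity
    calc _ ≤ Real.exp (Real.log 128 * (X.card * t)) * (p ^ P.card * Real.exp (-((127 / 128) * p * S.card))) := by
          gcongr
      _ = _ := by ring

lemma inc_card {n : ℕ} (u : Fin n) : ((allE n).filter (fun e => u ∈ e)).card = n - 1 := by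
  obtain ⟨T, hT⟩ : ∃ T : SimpleGraph (Fin n), T = ⊤ := ⟨_, rfl⟩
  have h1 : T.degree u = n - 1 := by
    subst hT
    have := SimpleGraph.complete_graph_degree u
    rw [Fintype.card_fin] at this
    rw [← this]
    congr!
  rw [← h1, ← SimpleGraph.card_incidenceFinset_eq_degree]
  congr 1
  ext e
  rw [SimpleGraph.mem_incidenceFinset, Finset.mem_filter, mem_allE]
  subst hT
  induction e using Sym2.ind with
  | _ a b => simp [SimpleGraph.incidenceSet]

lemma log128 : Real.log 128 ≤ 4.8525 := by
  have : Real.log 128 = 7 * Real.log 2 := by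
    rw [show (128 : ℝ) = 2 ^ (7 : ℕ) by norm_num, Real.log_pow]; norm_num
  rw [this]; linarith [Real.log_two_lt_d9]

lemma lowdeg_bound1 {n : ℕ} {p : ℝ} (h0 : 0 ≤ p) (h1 : p ≤ 1) (P : Finset (Sym2 (Fin n)))
    (hP : P ⊆ allE n) (u : Fin n) (hb : ((P.card : ℝ) + 3) ≤ 0.001 * n) :
    gnpProb n p (fun G => (∀ e ∈ P, e ∈ G.edgeSet) ∧ (G.degree u : ℝ) < n * p / 100) ≤
      p ^ P.card * Real.exp (- 0.94 * (n * p)) := by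
  have h := lowdeg_bound h0 h1 P hP {u} (n * p / 100)
  simp only [Finset.mem_singleton, forall_eq] at h
  refine h.trans ?_
  apply mul_le_mul_of_nonneg_left _ (by positivity)
  apply Real.exp_le_exp.2
  set S := (allE n).filter (fun e => (∃ v, v = u ∧ v ∈ e) ∧ e ∉ P) with hS
  have hn : 1 ≤ n := by
    by_contra hh
    have : n = 0 := by omega
    subst this
    exact u.elim0
  have hc : n - 1 ≤ S.card + P.card := by
    rw [← inc_card u]
    refine (Finset.card_le_card ?_).trans (Finset.card_union_le _ _)
    intro e he
    rw [Finset.mem_filter] at he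
    rw [Finset.mem_union, hS, Finset.mem_filter]
    by_cases hp : e ∈ P
    · exact Or.inr hp
    · exact Or.inl ⟨he.1, ⟨u, rfl, he.2⟩, hp⟩
  have hc' : (n : ℝ) - 1 ≤ S.card + P.card := by
    have : n ≤ S.card + P.card + 1 := by omega
    have : (n : ℝ) ≤ S.card + P.card + 1 := by exact_mod_cast this
    linarith
  have h6 : 0.999 * n ≤ (S.card : ℝ) := by linarith
  have h7 := mul_le_mul_of_nonneg_left h6 h0
  have h8 : 0 ≤ n * p := by positivity
  have h9 := mul_le_mul_of_nonneg_right log128 h8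
  have : ((({u} : Finset (Fin n)).card : ℕ) : ℝ) = 1 := by simp
  rw [this]
  have key : Real.log 128 * (1 * (n * p / 100)) - 127 / 128 * p * (S.card : ℝ)
    = Real.log 128 * (n * p) / 100 - 127 / 128 * (p * (S.card : ℝ)) := by ring
  have key2 := key.le
  refine key2.trans ?_
  linarith

lemma lowdeg_bound2 {n : ℕ} {p : ℝ} (h0 : 0 ≤ p) (h1 : p ≤ 1) (P : Finset (Sym2 (Fin n)))
    (hP : P ⊆ allE n) (u v : Fin n) (huv : u ≠ v) (hb : ((P.card : ℝ) + 3) ≤ 0.001 * n) :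
    gnpProb n p (fun G => (∀ e ∈ P, e ∈ G.edgeSet) ∧ (G.degree u : ℝ) < n * p / 100 ∧
      (G.degree v : ℝ) < n * p / 100) ≤
      p ^ P.card * Real.exp (- 1.88 * (n * p)) := by
  have h := lowdeg_bound h0 h1 P hP {u, v} (n * p / 100)
  simp only [Finset.mem_insert, Finset.mem_singleton, forall_eq_or_imp, forall_eq] at h
  refine h.trans ?_
  apply mul_le_mul_of_nonneg_left _ (by positivity)
  apply Real.exp_le_exp.2
  set S := (allE n).filter (fun e => (∃ w, (w = u ∨ w = v) ∧ w ∈ e) ∧ e ∉ P) with hS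
  have hn : 1 ≤ n := by
    by_contra hh
    have : n = 0 := by omega
    subst this
    exact u.elim0
  have hc : (n - 1) + (n - 1) ≤ S.card + P.card + 1 := by
    rw [← inc_card u]
    nth_rewrite 2 [inc_card u]
    rw [← inc_card v, ← Finset.card_union_add_card_inter]
    apply Nat.add_le_add
    · refine (Finset.card_le_card ?_).trans (Finset.card_union_le _ _)
      intro e he
      rw [Finset.mem_union, Finset.mem_filter, Finset.mem_filter] at he
      rw [Finset.mem_union, hS, Finset.mem_filter]
      by_cases hp : e ∈ P
      · exact Or.inr hp
      · refine Or.inl ?_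
        rcases he with he | he
        · exact ⟨he.1, ⟨u, Or.inl rfl, he.2⟩, hp⟩
        · exact ⟨he.1, ⟨v, Or.inr rfl, he.2⟩, hp⟩
    · refine (Finset.card_le_card (t := {s(u, v)}) ?_).trans (by simp)
      intro e he
      rw [Finset.mem_inter, Finset.mem_filter, Finset.mem_filter] at he
      rw [Finset.mem_singleton]
      exact (Sym2.mem_and_mem_iff huv).1 ⟨he.1.2, he.2.2⟩
  have hc' : 2 * (n : ℝ) - 2 ≤ S.card + P.card + 1 := by
    have : 2 * n ≤ S.card + P.card + 1 + 2 := by omega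
    have : 2 * (n : ℝ) ≤ S.card + P.card + 1 + 2 := by exact_mod_cast this
    linarith
  have h6 : 1.999 * n ≤ (S.card : ℝ) := by linarith
  have h7 := mul_le_mul_of_nonneg_left h6 h0
  have h8 : 0 ≤ n * p := by positivity
  have h9 := mul_le_mul_of_nonneg_right log128 h8
  have : ((({u, v} : Finset (Fin n)).card : ℕ) : ℝ) = 2 := by
    rw [Finset.card_pair huv]; norm_num
  rw [this]
  have key : Real.log 128 * (2 * (n * p / 100)) - 127 / 128 * p * (S.card : ℝ)
    = Real.log 128 * (n * p) / 50 - 127 / 128 * (p * (S.card : ℝ)) := by ring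
  have key2 := key.le
  refine key2.trans ?_
  linarith

/-- Markov bound for the number of low degree vertices. -/
lemma card_lowdeg_bound {n : ℕ} {p : ℝ} (h0 : 0 ≤ p) (h1 : p ≤ 1) (M : ℝ) (hM : 0 < M)
    (hb : 3 ≤ 0.001 * (n : ℝ)) :
    gnpProb n p (fun G => M < ((lowDegSet n (n * p / 100) G).card : ℝ)) ≤
      n * Real.exp (- 0.94 * (n * p)) / M := by
  rw [le_div_iff₀ hM]
  have h2 : ∀ u : Fin n, gnpProb n p (fun G => (G.degree u : ℝ) < n * p / 100)
      ≤ Real.exp (- 0.94 * (n * p)) := by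
    intro u
    have := lowdeg_bound1 h0 h1 ∅ (by simp) u (by simpa using hb)
    simpa using this
  have h3 : gnpProb n p (fun G => M < ((lowDegSet n (n * p / 100) G).card : ℝ)) * M ≤
      ∑ u : Fin n, gnpProb n p (fun G => (G.degree u : ℝ) < n * p / 100) := by
    unfold gnpProb
    rw [Finset.sum_comm, Finset.sum_mul]
    apply Finset.sum_le_sum
    intro G _
    have hw := gnpWeight_nonneg h0 h1 G
    rw [← Finset.sum_filter, Finset.sum_const, nsmul_eq_mul]
    split_ifs with h
    · rw [mul_comm]
      apply mul_le_mul_of_nonneg_right _ hw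
      exact h.le
    · rw [zero_mul]; positivity
  refine h3.trans ((Finset.sum_le_sum (fun u _ => h2 u)).trans ?_)
  simp

noncomputable def trE {n ℓ : ℕ} (w : Fin (ℓ + 1) → Fin n) : Finset (Sym2 (Fin n)) :=
  Finset.univ.image (fun i : Fin ℓ => s(w i.castSucc, w i.succ))

lemma trail_w {n ℓ : ℕ} {G : SimpleGraph (Fin n)} {u v : Fin n} (q : G.Walk u v) (hq : q.IsTrail)
    (hl : q.length = ℓ) : ∃ w : Fin (ℓ + 1) → Fin n, (trE w).card = ℓ ∧
      (∀ e ∈ trE w, e ∈ G.edgeSet) ∧ w 0 = u ∧ w (Fin.last ℓ) = v := by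
  subst hl
  refine ⟨fun i => q.getVert i, ?_, ?_, by simp, by simp⟩
  · rw [trE, Finset.card_image_of_injective, Finset.card_univ, Fintype.card_fin]
    intro i j hij
    have hi : (i : ℕ) < q.edges.length := by rw [Walk.length_edges]; exact i.2
    have hj : (j : ℕ) < q.edges.length := by rw [Walk.length_edges]; exact j.2
    have h1 : q.edges[(i : ℕ)] = s(q.getVert i, q.getVert (i + 1)) := Walk.getElem_edges _
    have h2 : q.edges[(j : ℕ)] = s(q.getVert j, q.getVert (j + 1)) := Walk.getElem_edges _
    have h3 : q.edges[(i : ℕ)] = q.edges[(j : ℕ)] := by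
      rw [h1, h2]; simpa using hij
    exact Fin.ext ((hq.edges_nodup.getElem_inj_iff).1 h3)
  · intro e he
    rw [trE, Finset.mem_image] at he
    obtain ⟨i, _, rfl⟩ := he
    simp only [Fin.val_castSucc, Fin.val_succ, SimpleGraph.mem_edgeSet]
    exact q.adj_getVert_succ i.2

lemma trail_bound {n : ℕ} {p : ℝ} (h0 : 0 ≤ p) (h1 : p ≤ 1) (ℓ : ℕ) (hl : 1 ≤ ℓ)
    (hb : ((ℓ : ℝ) + 3) ≤ 0.001 * n) :
    gnpProb n p (fun G => ∃ (u v : Fin n) (q : G.Walk u v), q.IsTrail ∧ q.length = ℓ ∧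
      (G.degree u : ℝ) < n * p / 100 ∧ (G.degree v : ℝ) < n * p / 100) ≤
      n * (n * p) ^ ℓ * Real.exp (- 1.88 * (n * p)) + (n * p) ^ ℓ * Real.exp (-0.94 * (n * p)) := by
  set Ev : (Fin (ℓ + 1) → Fin n) → SimpleGraph (Fin n) → Prop := fun w G =>
    (trE w).card = ℓ ∧ (∀ e ∈ trE w, e ∈ G.edgeSet) ∧ (G.degree (w 0) : ℝ) < n * p / 100 ∧
      (G.degree (w (Fin.last ℓ)) : ℝ) < n * p / 100 with hEv
  have hzero : ∀ w, ¬ ((trE w).card = ℓ ∧ trE w ⊆ allE n) → gnpProb n p (Ev w) = 0 := by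
    intro w hw
    apply Finset.sum_eq_zero
    intro G _
    rw [if_neg]
    rintro ⟨h2, h3, _⟩
    exact hw ⟨h2, fun e he => edgeSet_subset_allE G (h3 e he)⟩
  set Op := (Finset.univ : Finset (Fin (ℓ + 1) → Fin n)).filter (fun w => w 0 ≠ w (Fin.last ℓ))
  set Cl := (Finset.univ : Finset (Fin (ℓ + 1) → Fin n)).filter (fun w => w 0 = w (Fin.last ℓ)) with hCl
  have hop : ∀ w ∈ Op, gnpProb n p (Ev w) ≤ p ^ ℓ * Real.exp (- 1.88 * (n * p)) := by
    intro w hw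
    by_cases h : (trE w).card = ℓ ∧ trE w ⊆ allE n
    · have := lowdeg_bound2 h0 h1 (trE w) h.2 (w 0) (w (Fin.last ℓ)) (Finset.mem_filter.1 hw).2
        (by rw [h.1]; exact hb)
      rw [h.1] at this
      refine (gnpProb_mono h0 h1 ?_).trans this
      rintro G ⟨_, h⟩; exact h
    · rw [hzero w h]; positivity
  have hcl : ∀ w ∈ Cl, gnpProb n p (Ev w) ≤ p ^ ℓ * Real.exp (- 0.94 * (n * p)) := by
    intro w hw
    by_cases h : (trE w).card = ℓ ∧ trE w ⊆ allE n
    · have := lowdeg_bound1 h0 h1 (trE w) h.2 (w 0) (by rw [h.1]; exact hb)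
      rw [h.1] at this
      refine (gnpProb_mono h0 h1 ?_).trans this
      rintro G ⟨_, h⟩; exact ⟨h.1, h.2.1⟩
    · rw [hzero w h]; positivity
  have hOc : (Op.card : ℝ) ≤ (n : ℝ) ^ (ℓ + 1) := by
    have : Op.card ≤ n ^ (ℓ + 1) := by
      refine (Finset.card_le_univ _).trans ?_
      simp
    exact_mod_cast this
  have hCc : (Cl.card : ℝ) ≤ (n : ℝ) ^ ℓ := by
    have : Cl.card ≤ n ^ ℓ := by
      have h3 : Cl.card ≤ (Finset.univ : Finset (Fin ℓ → Fin n)).card := by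
        apply Finset.card_le_card_of_injOn (fun w i => w i.castSucc) (fun _ _ => by simp)
        intro w hw w' hw' heq
        have hw1 := (Finset.mem_filter.1 hw).2
        have hw2 := (Finset.mem_filter.1 hw').2
        have hz : w 0 = w' 0 := by
          have := congrFun heq ⟨0, hl⟩
          simpa using this
        funext i
        induction i using Fin.lastCases with
        | last => rw [← hw1, ← hw2, hz]
        | cast i => exact congrFun heq i
      simpa using h3
    exact_mod_cast this
  refine (gnpProb_mono h0 h1 (B := fun G => (∃ w ∈ Op, Ev w G) ∨ ∃ w ∈ Cl, Ev w G) ?_).trans ?_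
  · rintro G ⟨u, v, q, hq, hlen, hu, hv⟩
    obtain ⟨w, hw1, hw2, rfl, rfl⟩ := trail_w q hq hlen
    by_cases h : w 0 = w (Fin.last ℓ)
    · exact Or.inr ⟨w, by simp [hCl, h], hw1, hw2, hu, hv⟩
    · exact Or.inl ⟨w, Finset.mem_filter.2 ⟨Finset.mem_univ _, h⟩, hw1, hw2, hu, hv⟩
  · refine (gnpProb_or h0 h1 _ _).trans (add_le_add ?_ ?_)
    · refine (gnpProb_union h0 h1 _ _).trans ((Finset.sum_le_sum hop).trans ?_)
      rw [Finset.sum_const, nsmul_eq_mul]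
      calc _ ≤ (n : ℝ) ^ (ℓ + 1) * (p ^ ℓ * Real.exp (- 1.88 * (n * p))) := by gcongr
        _ = _ := by rw [mul_pow]; ring
    · refine (gnpProb_union h0 h1 _ _).trans ((Finset.sum_le_sum hcl).trans ?_)
      rw [Finset.sum_const, nsmul_eq_mul]
      calc _ ≤ (n : ℝ) ^ ℓ * (p ^ ℓ * Real.exp (- 0.94 * (n * p))) := by gcongr
        _ = _ := by rw [mul_pow]; ring

/-- all trails of length between 1 and `L`. -/
lemma trails_bound {n : ℕ} {p : ℝ} (h0 : 0 ≤ p) (h1 : p ≤ 1) (L : ℝ)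
    (hL : 0 ≤ L) (hd : 1 ≤ n * p) (hb : (L + 3) ≤ 0.001 * n) :
    gnpProb n p (fun G => ∃ (u v : Fin n) (q : G.Walk u v), q.IsTrail ∧ 0 < q.length ∧
      (q.length : ℝ) ≤ L ∧
      (G.degree u : ℝ) < n * p / 100 ∧ (G.degree v : ℝ) < n * p / 100) ≤
      L * (n * (n * p) ^ L * Real.exp (- 1.88 * (n * p)) + (n * p) ^ L * Real.exp (-0.94 * (n * p))) := by
  refine (gnpProb_mono h0 h1 (B := fun G => ∃ ℓ ∈ Finset.Icc 1 ⌊L⌋₊,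
    ∃ (u v : Fin n) (q : G.Walk u v), q.IsTrail ∧ q.length = ℓ ∧
      (G.degree u : ℝ) < n * p / 100 ∧ (G.degree v : ℝ) < n * p / 100) ?_).trans ?_
  · rintro G ⟨u, v, q, h2, h3, h4, h5⟩
    exact ⟨q.length, Finset.mem_Icc.2 ⟨h3, Nat.le_floor h4⟩, u, v, q, h2, rfl, h5⟩
  refine (gnpProb_union h0 h1 _ _).trans ?_
  have hstep : ∀ ℓ ∈ Finset.Icc 1 ⌊L⌋₊, gnpProb n p (fun G => ∃ (u v : Fin n) (q : G.Walk u v),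
      q.IsTrail ∧ q.length = ℓ ∧
      (G.degree u : ℝ) < n * p / 100 ∧ (G.degree v : ℝ) < n * p / 100) ≤
      (n * (n * p) ^ L * Real.exp (- 1.88 * (n * p)) + (n * p) ^ L * Real.exp (-0.94 * (n * p))) := by
    intro ℓ hℓ
    rw [Finset.mem_Icc] at hℓ
    have hle : (ℓ : ℝ) ≤ L := (Nat.le_floor_iff hL).1 hℓ.2
    refine (trail_bound h0 h1 ℓ hℓ.1 (by linarith)).trans ?_
    have : (n * p) ^ ℓ ≤ (n * p) ^ L := by
      rw [← Real.rpow_natCast]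
      exact Real.rpow_le_rpow_of_exponent_le hd hle
    gcongr
  refine (Finset.sum_le_sum hstep).trans ?_
  rw [Finset.sum_const, nsmul_eq_mul, Nat.card_Icc]
  have : ((⌊L⌋₊ + 1 - 1 : ℕ) : ℝ) ≤ L := by simpa using Nat.floor_le hL
  gcongr

lemma hitting {α ι : Type*} (E : Finset α) (hE : E.Nonempty) (F : Finset ι) (f : ι → Finset α)
    (σ : ℝ) (hσ1 : σ ≤ 1) (hf : ∀ i ∈ F, f i ⊆ E)
    (hc : ∀ i ∈ F, σ * E.card ≤ (f i).card) (r : ℕ) :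
    ∃ T ⊆ E, T.card ≤ r ∧
      ((F.filter (fun i => Disjoint (f i) T)).card : ℝ) ≤ F.card * (1 - σ) ^ r := by
  induction r with
  | zero => exact ⟨∅, by simp, by simp, by simp⟩
  | succ r ih =>
    obtain ⟨T, hT, hr, hF⟩ := ih
    set F' := F.filter (fun i => Disjoint (f i) T) with hF'
    have hsum : ∑ e ∈ E, ((F'.filter (fun i => e ∈ f i)).card : ℝ) = ∑ i ∈ F', ((f i).card : ℝ) := by
      have h1 : ∀ e ∈ E, ((F'.filter (fun i => e ∈ f i)).card : ℝ)
          = ∑ i ∈ F', if e ∈ f i then (1 : ℝ) else 0 := by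
        intro e _; rw [Finset.sum_boole]
      rw [Finset.sum_congr rfl h1, Finset.sum_comm]
      apply Finset.sum_congr rfl
      intro i hi
      rw [Finset.sum_boole]
      congr 2
      ext e
      simp only [Finset.mem_filter]
      exact ⟨fun h => h.2, fun h => ⟨hf i (Finset.mem_filter.1 hi).1 h, h⟩⟩
    have hlow : ∑ e ∈ E, σ * (F'.card : ℝ) ≤ ∑ e ∈ E, ((F'.filter (fun i => e ∈ f i)).card : ℝ) := by
      rw [hsum, Finset.sum_const, nsmul_eq_mul]
      have : ∑ i ∈ F', σ * (E.card : ℝ) ≤ ∑ i ∈ F', ((f i).card : ℝ) :=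
        Finset.sum_le_sum (fun i hi => hc i (Finset.mem_filter.1 hi).1)
      rw [Finset.sum_const, nsmul_eq_mul] at this
      linarith
    obtain ⟨e, heE, he⟩ := Finset.exists_le_of_sum_le hE hlow
    refine ⟨insert e T, Finset.insert_subset heE hT, (Finset.card_insert_le _ _).trans (by omega), ?_⟩
    have h2 : F.filter (fun i => Disjoint (f i) (insert e T)) = F'.filter (fun i => ¬ e ∈ f i) := by
      ext i
      simp only [Finset.mem_filter, Finset.disjoint_insert_right, hF']
      tauto
    rw [h2]
    have h3 := Finset.card_filter_add_card_filter_not (s := F') (fun i => e ∈ f i)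
    have h4 : ((F'.filter (fun i => e ∈ f i)).card : ℝ) + ((F'.filter (fun i => ¬ e ∈ f i)).card : ℝ)
        = F'.card := by exact_mod_cast h3
    have h5 : 0 ≤ 1 - σ := by linarith
    calc ((F'.filter (fun i => ¬ e ∈ f i)).card : ℝ) ≤ F'.card * (1 - σ) := by linarith
      _ ≤ (F.card * (1 - σ) ^ r) * (1 - σ) := by gcongr
      _ = _ := by ring

lemma mem_extNbhd {V : Type*} [Fintype V] (G : SimpleGraph V) (U : Finset V) (v : V) :
    v ∈ extNbhd G U ↔ v ∉ U ∧ ∃ u ∈ U, G.Adj u v := by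
  simp [extNbhd]

lemma expander_of {n : ℕ} (Γ : SimpleGraph (Fin n)) (V1 : Finset (Fin n)) (R : ℝ) (f : ℕ → ℝ)
    (h : ∀ U ⊆ V1, U.Nonempty → (U.card : ℝ) ≤ R → f U.card * U.card ≤
      ((V1.filter (fun v => v ∉ U ∧ ∃ u ∈ U, Γ.Adj u v)).card : ℝ)) :
    IsExpander (Γ.induce (V1 : Set (Fin n))) R f := by
  intro U hU hR
  have h1 := h (U.map (Function.Embedding.subtype _)) ?_ ?_ ?_
  · rw [Finset.card_map] at h1
    refine h1.trans ?_
    rw [← Finset.card_map (Function.Embedding.subtype _)]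
    have : (V1.filter (fun v => v ∉ U.map (Function.Embedding.subtype _) ∧
        ∃ u ∈ U.map (Function.Embedding.subtype _), Γ.Adj u v)) ⊆
        (extNbhd (Γ.induce (V1 : Set (Fin n))) U).map (Function.Embedding.subtype _) := by
      intro v hv
      rw [Finset.mem_filter] at hv
      obtain ⟨hv1, hv2, u, hu, huv⟩ := hv
      rw [Finset.mem_map] at hu
      obtain ⟨u', hu', rfl⟩ := hu
      rw [Finset.mem_map]
      refine ⟨⟨v, by simpa using hv1⟩, ?_, rfl⟩
      rw [mem_extNbhd]
      refine ⟨?_, u', hu', ?_⟩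
      · intro hc; exact hv2 (Finset.mem_map.2 ⟨_, hc, rfl⟩)
      · simpa using huv
    exact_mod_cast Finset.card_le_card this
  · intro v hv
    rw [Finset.mem_map] at hv
    obtain ⟨u, _, rfl⟩ := hv
    simp
  · simpa using hU
  · simpa using hR

lemma edges_in {n : ℕ} (G Γ : SimpleGraph (Fin n)) (hΓ : Γ ≤ G) (V1 U W : Finset (Fin n)) (k : ℕ)
    (hU : U ⊆ W) (hk : ∀ u ∈ U, k ≤ (Γ.neighborFinset u ∩ V1).card)
    (hW : ∀ u ∈ U, Γ.neighborFinset u ∩ V1 ⊆ W) :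
    k * U.card ≤ 2 * eIn G W := by
  set EW := G.edgeFinset.filter (fun e => ∀ v ∈ e, v ∈ W) with hEW
  have h1 : ∀ u ∈ U, k ≤ (EW.filter (fun e => u ∈ e)).card := by
    intro u hu
    refine (hk u hu).trans ?_
    apply Finset.card_le_card_of_injOn (fun w => s(u, w))
    · intro w hw
      have hwW := hW u hu hw
      simp only [Finset.coe_inter, Set.mem_inter_iff, Finset.mem_coe, SimpleGraph.mem_neighborFinset] at hw
      simp only [Finset.coe_filter, hEW, Finset.mem_filter, SimpleGraph.mem_edgeFinset]
      refine ⟨⟨hΓ hw.1, ?_⟩, by simp⟩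
      intro v hv
      rcases Sym2.mem_iff.1 hv with rfl | rfl
      · exact hU hu
      · exact hwW
    · intro a _ b _ hab
      exact Sym2.congr_right.1 hab
  have h2 : ∑ u ∈ U, (EW.filter (fun e => u ∈ e)).card = ∑ e ∈ EW, (U.filter (fun u => u ∈ e)).card := by
    simp_rw [Finset.card_filter]
    exact Finset.sum_comm
  have h3 : ∀ e ∈ EW, (U.filter (fun u => u ∈ e)).card ≤ 2 := by
    intro e _
    induction e using Sym2.ind with
    | _ a b =>
      refine (Finset.card_le_card (t := {a, b}) ?_).trans Finset.card_le_two
      intro u hu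
      simpa using (Finset.mem_filter.1 hu).2
  calc k * U.card = ∑ u ∈ U, k := by rw [Finset.sum_const, smul_eq_mul, mul_comm]
    _ ≤ ∑ u ∈ U, (EW.filter (fun e => u ∈ e)).card := Finset.sum_le_sum h1
    _ = ∑ e ∈ EW, (U.filter (fun u => u ∈ e)).card := h2
    _ ≤ ∑ e ∈ EW, 2 := Finset.sum_le_sum h3
    _ = 2 * eIn G W := by rw [Finset.sum_const, smul_eq_mul, mul_comm, hEW, eIn]; congr!

lemma exp_small {n : ℕ} (G Γ : SimpleGraph (Fin n)) (hΓ : Γ ≤ G) (V1 U : Finset (Fin n)) (k : ℕ)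
    (m s a : ℝ) (hm : 0 ≤ m) (ha : 0 ≤ a)
    (hd : ∀ W : Finset (Fin n), 0 < W.card → (W.card : ℝ) ≤ s → (eIn G W : ℝ) < m * W.card)
    (hUn : U.Nonempty)
    (hk : ∀ u ∈ U, k ≤ (Γ.neighborFinset u ∩ V1).card)
    (hs : (1 + a) * U.card ≤ s) (hkm : 2 * m * (1 + a) ≤ k) :
    a * U.card ≤ ((V1.filter (fun v => v ∉ U ∧ ∃ u ∈ U, Γ.Adj u v)).card : ℝ) := by
  by_contra hcon
  push Not at hcon
  set N := V1.filter (fun v => v ∉ U ∧ ∃ u ∈ U, Γ.Adj u v) with hN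
  have hUc : 0 < U.card := hUn.card_pos
  have hWc : ((U ∪ N).card : ℝ) ≤ (1 + a) * U.card := by
    have : ((U ∪ N).card : ℝ) ≤ U.card + N.card := by exact_mod_cast Finset.card_union_le U N
    linarith
  have hW0 : 0 < (U ∪ N).card := lt_of_lt_of_le hUc (Finset.card_le_card Finset.subset_union_left)
  have h1 := hd (U ∪ N) hW0 (hWc.trans hs)
  have h2 := edges_in G Γ hΓ V1 U (U ∪ N) k Finset.subset_union_left hk (by
    intro u hu w hw
    rw [Finset.mem_inter, SimpleGraph.mem_neighborFinset] at hw
    rw [Finset.mem_union]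
    by_cases hwU : w ∈ U
    · exact Or.inl hwU
    · exact Or.inr (Finset.mem_filter.2 ⟨hw.2, hwU, u, hu, hw.1⟩))
  have h3 : (k : ℝ) * U.card ≤ 2 * eIn G (U ∪ N) := by exact_mod_cast h2
  have h4 := mul_le_mul_of_nonneg_left hWc hm
  have hUr : (0 : ℝ) ≤ U.card := by positivity
  have h5 := mul_le_mul_of_nonneg_right hkm hUr
  nlinarith

/-- Any graph between `Γ₀` and `G` lies in the family. -/
lemma family_of {n : ℕ} (G Γ : SimpleGraph (Fin n)) (hΓ : Γ ≤ G) (D : Finset (Fin n)) (β : ℝ)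
    (k : ℕ) (m1 m2 s1 : ℝ) (hβ : 0 < β) (hβ1 : β ≤ 1 / 4)
    (hD : (D.card : ℝ) ≤ (n : ℝ) ^ (0.09 : ℝ)) (hDn : (n : ℝ) ^ (0.09 : ℝ) ≤ β * n)
    (hn : 4 ≤ β * n)
    (htr : ∀ (u v : Fin n) (q : G.Walk u v), q.IsTrail → 0 < q.length → u ∈ D → v ∈ D →
      2 * Real.log n / (3 * Real.log (Real.log n)) < (q.length : ℝ))
    (hm1 : 0 ≤ m1) (hm2 : 0 ≤ m2)
    (hsm : ∀ W : Finset (Fin n), 0 < W.card → (W.card : ℝ) ≤ s1 → (eIn G W : ℝ) < m1 * W.card)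
    (hmid : ∀ W : Finset (Fin n), 0 < W.card → (W.card : ℝ) ≤ 12 * (β * n) →
      (eIn G W : ℝ) < m2 * W.card)
    (hs1 : (1 + Real.log n ^ (0.8 : ℝ)) * (n : ℝ) ^ (0.1 : ℝ) ≤ s1)
    (hk1 : 2 * m1 * (1 + Real.log n ^ (0.8 : ℝ)) ≤ k)
    (hk2 : 24 * m2 ≤ k)
    (hdD : ∀ u ∈ D, 2 ≤ (Γ.neighborFinset u ∩ (Finset.univ \ D)).card)
    (hdV : ∀ u ∉ D, k ≤ (Γ.neighborFinset u ∩ (Finset.univ \ D)).card)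
    (hcut : ∀ U Z : Finset (Fin n), U ⊆ Finset.univ \ D → Disjoint U Z → β * n / 2 ≤ U.card →
      (1 / 3 - 28 * β) * n ≤ Z.card → ∃ u ∈ U, ∃ z ∈ Z, Γ.Adj u z) :
    InFamilyL n β Γ (Finset.univ \ D) D := by
  set V1 := (Finset.univ : Finset (Fin n)) \ D with hV1
  have hn0 : (0 : ℝ) < n := by
    by_contra h; push Not at h; nlinarith
  have hn1' : V1.card + D.card = n := by
    rw [hV1, Finset.card_sdiff_add_card_eq_card (Finset.subset_univ _), Finset.card_univ,
      Fintype.card_fin]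
  have hn1 : (V1.card : ℝ) + D.card = n := by exact_mod_cast hn1'
  have hn1le : (V1.card : ℝ) ≤ n := by
    have : (0 : ℝ) ≤ D.card := by positivity
    linarith
  have hn1ge : (1 - β) * n ≤ (V1.card : ℝ) := by linarith
  refine ⟨Finset.sdiff_disjoint, by simp [hV1], hD, hdD, ?_, ?_, ?_⟩
  · intro u hu v hv q hq hpos
    have := htr u v (q.mapLe hΓ) (hq.mapLe hΓ).isTrail (by simpa using hpos) hu hv
    simpa using this
  · intro u hu q hq
    have := htr u u (q.mapLe hΓ) (hq.mapLe hΓ).isTrail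
      (by simp; have := hq.three_le_length; omega) hu hu
    simpa using this
  · apply expander_of
    intro U hUV hUn hUR
    have hkU : ∀ u ∈ U, k ≤ (Γ.neighborFinset u ∩ V1).card := by
      intro u hu
      exact hdV u (Finset.mem_sdiff.1 (hUV hu)).2
    have hU1 : (1 : ℝ) ≤ U.card := by exact_mod_cast hUn.card_pos
    have hV1pos : (1 : ℝ) ≤ V1.card := by
      have : (U.card : ℝ) ≤ V1.card := by exact_mod_cast Finset.card_le_card hUV
      linarith
    unfold fBeta
    split_ifs with hc1 hc2
    · by_contra hcon
      push Not at hcon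
      set N := V1.filter (fun v => v ∉ U ∧ ∃ u ∈ U, Γ.Adj u v) with hN
      have hUbig : β * n / 2 ≤ (U.card : ℝ) := by
        have h1 := Nat.lt_floor_add_one (β * (V1.card : ℝ))
        rw [← hc1] at h1
        have := mul_le_mul_of_nonneg_left hn1ge hβ.le
        nlinarith
      have hNle : (N.card : ℝ) ≤ 2 * (1 + 39 * β) / 3 * V1.card := by
        refine hcon.le.trans ?_
        calc 2 * (1 + 39 * β) / (3 * β) * (U.card : ℝ) ≤ 2 * (1 + 39 * β) / (3 * β) * (β * V1.card) := by
              gcongr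
          _ = _ := by field_simp
      obtain ⟨u, hu, z, hz, huz⟩ := hcut U (V1 \ (U ∪ N)) hUV (by
          rw [Finset.disjoint_left]
          intro x hx hx'
          exact (Finset.mem_sdiff.1 hx').2 (Finset.mem_union_left _ hx)) hUbig (by
          have h1 : V1.card ≤ (V1 \ (U ∪ N)).card + (U ∪ N).card := by
            have := Finset.le_card_sdiff (U ∪ N) V1
            omega
          have h1' : (V1.card : ℝ) ≤ (V1 \ (U ∪ N)).card + (U ∪ N).card := by exact_mod_cast h1
          have h2 : ((U ∪ N).card : ℝ) ≤ U.card + N.card := by exact_mod_cast Finset.card_union_le U N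
          by_cases hpos : 0 ≤ 1 / 3 - 27 * β
          · have h4 : (1 / 3 - 27 * β) * ((1 - β) * n) ≤ (1 / 3 - 27 * β) * V1.card := by gcongr
            have h5 : (1 / 3 - 28 * β) * n ≤ (1 / 3 - 27 * β) * ((1 - β) * n) := by
              have : 0 ≤ β * n := by positivity
              nlinarith [mul_nonneg hβ.le this]
            nlinarith
          · have : (1 / 3 - 28 * β) * n ≤ 0 := by
              apply mul_nonpos_of_nonpos_of_nonneg <;> linarith
            have h6 : (0 : ℝ) ≤ (V1 \ (U ∪ N)).card := by positivity
            linarith)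
      rw [Finset.mem_sdiff, Finset.mem_union] at hz
      push Not at hz
      exact hz.2.2 (Finset.mem_filter.2 ⟨hz.1, hz.2.1, u, hu, huz⟩)
    · have hlog : Real.log V1.card ^ (0.8 : ℝ) ≤ Real.log n ^ (0.8 : ℝ) := by
        apply Real.rpow_le_rpow (Real.log_nonneg hV1pos) _ (by norm_num)
        exact Real.log_le_log (by linarith) hn1le
      have hl0 : 0 ≤ Real.log n ^ (0.8 : ℝ) :=
        Real.rpow_nonneg (Real.log_nonneg (by linarith)) _
      have := exp_small G Γ hΓ V1 U k m1 s1 (Real.log n ^ (0.8 : ℝ)) hm1 hl0 hsm hUn hkU (by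
        refine le_trans ?_ hs1
        have : (V1.card : ℝ) ^ (0.1 : ℝ) ≤ (n : ℝ) ^ (0.1 : ℝ) :=
          Real.rpow_le_rpow (by positivity) hn1le (by norm_num)
        have : (U.card : ℝ) ≤ (n : ℝ) ^ (0.1 : ℝ) := by linarith
        gcongr) hk1
      refine le_trans ?_ this
      gcongr
    · refine exp_small G Γ hΓ V1 U k m2 (12 * (β * n)) 11 hm2 (by norm_num) hmid hUn hkU ?_ (by linarith)
      have := mul_le_mul_of_nonneg_left hn1le hβ.le
      linarith

lemma edgeCount_le {n : ℕ} (Γ : SimpleGraph (Fin n)) (S : Finset (Sym2 (Fin n)))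
    (h : ∀ e ∈ Γ.edgeSet, e ∈ S) : edgeCount Γ ≤ S.card := by
  unfold edgeCount
  apply Finset.card_le_card
  intro e he
  exact h e (SimpleGraph.mem_edgeFinset.1 he)

lemma hitting' {α ι : Type*} (E : Finset α) (hE : E.Nonempty) (F : Finset ι) (f : ι → Finset α)
    (σ : ℝ) (hσ1 : σ ≤ 1) (hf : ∀ i ∈ F, f i ⊆ E)
    (hc : ∀ i ∈ F, σ * E.card ≤ (f i).card) (r : ℕ) (hr : (F.card : ℝ) * (1 - σ) ^ r < 1) :
    ∃ T ⊆ E, T.card ≤ r ∧ ∀ i ∈ F, ¬ Disjoint (f i) T := by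
  obtain ⟨T, hT, hTr, hTF⟩ := hitting E hE F f σ hσ1 hf hc r
  refine ⟨T, hT, hTr, ?_⟩
  intro q hq hdis
  have h1 : (1 : ℝ) ≤ (F.filter (fun i => Disjoint (f i) T)).card := by
    have : 0 < (F.filter (fun i => Disjoint (f i) T)).card :=
      Finset.card_pos.2 ⟨q, Finset.mem_filter.2 ⟨hq, hdis⟩⟩
    exact_mod_cast this
  linarith

lemma eBetween_sdiff {n : ℕ} (G H : SimpleGraph (Fin n)) (U Z : Finset (Fin n)) :
    eBetween G U Z ≤ eBetween (G \ H) U Z + eBetween H U Z := by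
  unfold eBetween
  refine (Finset.card_le_card ?_).trans (Finset.card_union_le _ _)
  intro q hq
  simp only [Finset.mem_union, Finset.mem_filter, SimpleGraph.sdiff_adj] at hq ⊢
  tauto

lemma eBetween_le_deg {n : ℕ} (H : SimpleGraph (Fin n)) (U Z : Finset (Fin n)) :
    eBetween H U Z ≤ ∑ u ∈ U, H.degree u := by
  unfold eBetween
  rw [Finset.card_filter, Finset.sum_product]
  apply Finset.sum_le_sum
  intro u _
  rw [← Finset.card_filter, ← SimpleGraph.card_neighborFinset_eq_degree]
  apply Finset.card_le_card
  intro z hz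
  simpa using (Finset.mem_filter.1 hz).2

noncomputable def cutE {n : ℕ} (G : SimpleGraph (Fin n)) (U Z : Finset (Fin n)) :
    Finset (Sym2 (Fin n)) :=
  G.edgeFinset.filter (fun e => ∃ u ∈ U, ∃ z ∈ Z, e = s(u, z))

lemma eBetween_le_cutE {n : ℕ} (G : SimpleGraph (Fin n)) (U Z : Finset (Fin n))
    (hUZ : Disjoint U Z) : eBetween G U Z ≤ (cutE G U Z).card := by
  unfold eBetween
  apply Finset.card_le_card_of_injOn (fun q => s(q.1, q.2))
  · rintro ⟨a, b⟩ h
    simp only [Finset.coe_filter, Finset.mem_product, Set.mem_ofPred_eq] at h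
    simp only [cutE, Finset.coe_filter, Set.mem_ofPred_eq, SimpleGraph.mem_edgeFinset,
      SimpleGraph.mem_edgeSet]
    exact ⟨h.2, a, h.1.1, b, h.1.2, rfl⟩
  · rintro ⟨a, b⟩ h ⟨a', b'⟩ h' heq
    simp only [Finset.coe_filter, Finset.mem_product, Set.mem_ofPred_eq] at h h'
    simp only [Sym2.eq_iff] at heq
    rcases heq with ⟨rfl, rfl⟩ | ⟨rfl, rfl⟩
    · rfl
    · exact absurd h'.1.2 (Finset.disjoint_left.1 hUZ h.1.1)

/-- the sparse set of edges hitting all large cuts. -/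
lemma exists_T {n : ℕ} (G H : SimpleGraph (Fin n)) (hH : H ≤ G) (D : Finset (Fin n))
    (p β ε : ℝ) (r : ℕ) (hp : 0 < p) (hβ : 0 < β) (hε : 0 < ε) (hε1 : ε ≤ 1 / 3)
    (hβε : β ≤ ε / 100) (hβn : 4 ≤ β * n)
    (hHd : ∀ u ∉ D, (H.degree u : ℝ) ≤ (1 / 3 - ε) * G.degree u)
    (hcut : ∀ U Z : Finset (Fin n), Disjoint U Z → β * n / 2 ≤ U.card →
      (1 / 3 - 28 * β) * n ≤ Z.card → (1 - ε / 10) * (U.card * Z.card * p) ≤ eBetween G U Z)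
    (hdeg : ∀ U : Finset (Fin n), β * n / 2 ≤ U.card →
      ∑ u ∈ U, (G.degree u : ℝ) ≤ (1 + ε / 10) * (U.card * (n * p)))
    (hr : (4 : ℝ) ^ n * (1 - ε * β / 4) ^ r < 1) :
    ∃ T : Finset (Sym2 (Fin n)), (∀ e ∈ T, e ∈ (G \ H).edgeSet) ∧ T.card ≤ r ∧
      ∀ U Z : Finset (Fin n), U ⊆ Finset.univ \ D → Disjoint U Z → β * n / 2 ≤ U.card →
      (1 / 3 - 28 * β) * n ≤ Z.card → ∃ u ∈ U, ∃ z ∈ Z, s(u, z) ∈ T := by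
  have hn : (0 : ℝ) < n := by
    by_contra h; push Not at h; nlinarith
  set E := (G \ H).edgeFinset with hE
  set F := (Finset.univ : Finset (Finset (Fin n) × Finset (Fin n))).filter (fun q =>
    q.1 ⊆ Finset.univ \ D ∧ Disjoint q.1 q.2 ∧ β * n / 2 ≤ q.1.card ∧
      (1 / 3 - 28 * β) * n ≤ q.2.card) with hF
  set f : Finset (Fin n) × Finset (Fin n) → Finset (Sym2 (Fin n)) :=
    fun q => cutE (G \ H) q.1 q.2 with hf
  have hfE : ∀ q ∈ F, f q ⊆ E := fun q _ => by
    intro e he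
    have := (Finset.mem_filter.1 he).1
    rw [hE]
    simpa using this
  have hlow : ∀ q ∈ F, ε * β / 4 * (n * (n * p)) ≤ (f q).card := by
    rintro ⟨U, Z⟩ hq
    rw [hF, Finset.mem_filter] at hq
    obtain ⟨_, hUV, hUZ, hU, hZ⟩ := hq
    simp only at hUV hUZ hU hZ
    have h1 : ((eBetween G U Z : ℕ) : ℝ) ≤ (f (U, Z)).card + ∑ u ∈ U, (H.degree u : ℝ) := by
      have := (eBetween_sdiff G H U Z).trans (Nat.add_le_add
        (eBetween_le_cutE (G \ H) U Z hUZ) (eBetween_le_deg H U Z))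
      exact_mod_cast this
    have h2 : ∑ u ∈ U, (H.degree u : ℝ) ≤ (1 / 3 - ε) * ∑ u ∈ U, (G.degree u : ℝ) := by
      rw [Finset.mul_sum]
      exact Finset.sum_le_sum (fun u hu => hHd u (Finset.mem_sdiff.1 (hUV hu)).2)
    have h3 := mul_le_mul_of_nonneg_left (hdeg U hU) (by linarith : (0 : ℝ) ≤ 1 / 3 - ε)
    have h4 := hcut U Z hUZ hU hZ
    have hUp : (0 : ℝ) ≤ U.card * p := by positivity
    have h5 : (1 - ε / 10) * (U.card * p * ((1 / 3 - 28 * β) * n)) ≤ (1 - ε / 10) * (U.card * Z.card * p) := by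
      have := mul_le_mul_of_nonneg_left hZ hUp
      have h6 : (0 : ℝ) ≤ 1 - ε / 10 := by linarith
      have := mul_le_mul_of_nonneg_left this h6
      nlinarith
    have hUd : (0 : ℝ) ≤ U.card * (n * p) := by positivity
    have h7 : ε / 2 ≤ (1 - ε / 10) * (1 / 3 - 28 * β) - (1 / 3 - ε) * (1 + ε / 10) := by
      nlinarith [mul_pos hε hβ, mul_pos hε hε]
    have h8 := mul_le_mul_of_nonneg_right h7 hUd
    have h9 : β * n / 2 * (n * p) ≤ U.card * (n * p) := by gcongr
    have h10 := mul_le_mul_of_nonneg_left h9 hε.le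
    nlinarith
  have hpos : (0 : ℝ) < ε * β / 4 * (n * (n * p)) := by positivity
  obtain ⟨T, hT, hTr, hTF⟩ : ∃ T ⊆ E, T.card ≤ r ∧ ∀ q ∈ F, ¬ Disjoint (f q) T := by
    by_cases hEn : E.Nonempty
    · have hEc : (E.card : ℝ) ≤ n * (n * p) := by
        have h1 : E.card ≤ G.edgeFinset.card := by
          apply Finset.card_le_card
          rw [hE]
          intro e he
          rw [SimpleGraph.mem_edgeFinset] at he ⊢
          exact SimpleGraph.edgeSet_mono sdiff_le he
        have h2 := SimpleGraph.sum_degrees_eq_twice_card_edges G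
        have h3 := hdeg Finset.univ (by
          rw [Finset.card_univ, Fintype.card_fin]; nlinarith)
        have h4 : ∑ u, (G.degree u : ℝ) = 2 * G.edgeFinset.card := by exact_mod_cast h2
        rw [h4, Finset.card_univ, Fintype.card_fin] at h3
        have h5 : (E.card : ℝ) ≤ G.edgeFinset.card := by exact_mod_cast h1
        have h6 : (0 : ℝ) ≤ n * (n * p) := by positivity
        nlinarith
      have h2 : (F.card : ℝ) ≤ 4 ^ n := by
        have : F.card ≤ 4 ^ n := by
          refine (Finset.card_le_univ _).trans ?_
          rw [Fintype.card_prod, Fintype.card_finset, Fintype.card_fin, ← mul_pow]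
          norm_num
        exact_mod_cast this
      have h3 : 0 ≤ (1 - ε * β / 4) ^ r := by
        apply pow_nonneg; nlinarith
      have h4 := mul_le_mul_of_nonneg_right h2 h3
      exact hitting' E hEn F f (ε * β / 4) (by nlinarith) hfE (by
        intro q hq
        refine le_trans ?_ (hlow q hq)
        gcongr) r (by linarith)
    · refine ⟨∅, by simp, by simp, ?_⟩
      intro q hq
      exfalso
      rw [Finset.not_nonempty_iff_eq_empty] at hEn
      have := hfE q hq
      rw [hEn, Finset.subset_empty] at this
      have h2 := hlow q hq
      rw [this] at h2
      simp only [Finset.card_empty, Nat.cast_zero] at h2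
      linarith
  refine ⟨T, fun e he => by have := hT he; rw [hE] at this; simpa using this, hTr, ?_⟩
  intro U Z hUV hUZ hU hZ
  have := hTF (U, Z) (Finset.mem_filter.2 ⟨Finset.mem_univ _, hUV, hUZ, hU, hZ⟩)
  rw [Finset.not_disjoint_iff] at this
  obtain ⟨e, he, heT⟩ := this
  obtain ⟨u, hu, z, hz, rfl⟩ := (Finset.mem_filter.1 he).2
  exact ⟨u, hu, z, hz, heT⟩

lemma deg_sdiff {n : ℕ} (G H : SimpleGraph (Fin n)) (v : Fin n) :
    G.degree v ≤ ((G \ H).neighborFinset v).card + H.degree v := by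
  rw [← SimpleGraph.card_neighborFinset_eq_degree, ← SimpleGraph.card_neighborFinset_eq_degree]
  refine (Finset.card_le_card ?_).trans (Finset.card_union_le _ _)
  intro w hw
  simp only [Finset.mem_union, SimpleGraph.mem_neighborFinset, SimpleGraph.sdiff_adj] at hw ⊢
  tauto

/-- neighbourhood selection -/
lemma exists_N {n : ℕ} (G H : SimpleGraph (Fin n)) (p ε : ℝ) (k : ℕ)
    (D : Finset (Fin n)) (hD : D = lowDegSet n (n * p / 100) G)
    (htr : ∀ (u v : Fin n) (q : G.Walk u v), q.IsTrail → 0 < q.length → u ∈ D → v ∈ D →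
      2 * Real.log n / (3 * Real.log (Real.log n)) < (q.length : ℝ))
    (hL : 2 ≤ 2 * Real.log n / (3 * Real.log (Real.log n)))
    (hε : 0 < ε) (hk2 : 2 ≤ k) (hkd : (k : ℝ) + 1 ≤ n * p / 150)
    (hHD : ∀ v ∈ D, (H.degree v : ℝ) ≤ (G.degree v : ℝ) - 2)
    (hHV : ∀ v ∉ D, (H.degree v : ℝ) ≤ (1 / 3 - ε) * (G.degree v : ℝ)) :
    ∀ v : Fin n, ∃ N : Finset (Fin n), N ⊆ (G \ H).neighborFinset v ∩ (Finset.univ \ D) ∧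
      N.card ≤ k ∧ (v ∈ D → 2 ≤ N.card) ∧ (v ∉ D → k ≤ N.card) := by
  intro v
  have hds : (G.degree v : ℝ) ≤ ((G \ H).neighborFinset v).card + H.degree v := by
    exact_mod_cast deg_sdiff G H v
  by_cases hv : v ∈ D
  · have hsub : (G \ H).neighborFinset v ⊆ (G \ H).neighborFinset v ∩ (Finset.univ \ D) := by
      intro w hw
      rw [Finset.mem_inter, Finset.mem_sdiff]
      refine ⟨hw, Finset.mem_univ _, fun hwD => ?_⟩
      rw [SimpleGraph.mem_neighborFinset, SimpleGraph.sdiff_adj] at hw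
      have := htr v w (hw.1.toWalk) (Walk.IsPath.of_adj hw.1).isTrail (by simp) hv hwD
      simp at this
      linarith
    have h2 : 2 ≤ ((G \ H).neighborFinset v ∩ (Finset.univ \ D)).card := by
      refine le_trans ?_ (Finset.card_le_card hsub)
      have : (2 : ℝ) ≤ ((G \ H).neighborFinset v).card := by linarith [hHD v hv]
      exact_mod_cast this
    obtain ⟨N, hN, hc⟩ := Finset.exists_subset_card_eq h2
    exact ⟨N, hN, by omega, fun _ => hc.ge, fun h => absurd hv h⟩
  · have hdeg : n * p / 100 ≤ (G.degree v : ℝ) := by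
      by_contra h
      push Not at h
      exact hv (by rw [hD, lowDegSet, Finset.mem_filter]; exact ⟨Finset.mem_univ _, h⟩)
    have hone : ((G \ H).neighborFinset v ∩ D).card ≤ 1 := by
      rw [Finset.card_le_one]
      intro a ha b hb
      by_contra hab
      rw [Finset.mem_inter, SimpleGraph.mem_neighborFinset, SimpleGraph.sdiff_adj] at ha hb
      have hva := ha.1.1
      have hvb := hb.1.1
      have := htr a b (Walk.cons hva.symm hvb.toWalk) (by
        refine Walk.IsPath.isTrail ?_
        rw [Walk.cons_isPath_iff]
        refine ⟨Walk.IsPath.of_adj hvb, ?_⟩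
        simp only [Adj.toWalk, Walk.support_cons, Walk.support_nil, List.mem_cons,
          List.not_mem_nil, or_false, not_or]
        exact ⟨hva.ne', hab⟩) (by simp) ha.2 hb.2
      simp at this
      norm_num at this
      linarith
    have hsplit : ((G \ H).neighborFinset v).card ≤
        ((G \ H).neighborFinset v ∩ (Finset.univ \ D)).card + 1 := by
      refine le_trans ?_ (Nat.add_le_add_left hone _)
      refine (Finset.card_le_card ?_).trans (Finset.card_union_le _ _)
      intro w hw
      rw [Finset.mem_union, Finset.mem_inter, Finset.mem_inter, Finset.mem_sdiff]
      by_cases hwD : w ∈ D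
      · exact Or.inr ⟨hw, hwD⟩
      · exact Or.inl ⟨hw, Finset.mem_univ _, hwD⟩
    have hk : k ≤ ((G \ H).neighborFinset v ∩ (Finset.univ \ D)).card := by
      have h1 := hHV v hv
      have h2 : (((G \ H).neighborFinset v).card : ℝ) ≤
        ((G \ H).neighborFinset v ∩ (Finset.univ \ D)).card + 1 := by exact_mod_cast hsplit
      have h3 : 0 ≤ ε * (G.degree v : ℝ) := by positivity
      have : (k : ℝ) ≤ ((G \ H).neighborFinset v ∩ (Finset.univ \ D)).card := by nlinarith
      exact_mod_cast this
    obtain ⟨N, hN, hc⟩ := Finset.exists_subset_card_eq hk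
    exact ⟨N, hN, hc.le, fun h => absurd h hv, fun _ => hc.ge⟩

lemma determ {n : ℕ} (G : SimpleGraph (Fin n)) (p β ε : ℝ) (k r : ℕ) (m1 m2 s1 : ℝ)
    (hp : 0 < p) (hβ : 0 < β) (hβ1 : β ≤ 1 / 4) (hε : 0 < ε) (hε1 : ε ≤ 1 / 3)
    (hβε : β ≤ ε / 100) (hβn : 4 ≤ β * n)
    (hDc : ((lowDegSet n (n * p / 100) G).card : ℝ) ≤ (n : ℝ) ^ (0.09 : ℝ))
    (hDn : (n : ℝ) ^ (0.09 : ℝ) ≤ β * n)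
    (htr : ∀ (u v : Fin n) (q : G.Walk u v), q.IsTrail → 0 < q.length →
      (G.degree u : ℝ) < n * p / 100 → (G.degree v : ℝ) < n * p / 100 →
      2 * Real.log n / (3 * Real.log (Real.log n)) < (q.length : ℝ))
    (hL : 2 ≤ 2 * Real.log n / (3 * Real.log (Real.log n)))
    (hm1 : 0 ≤ m1) (hm2 : 0 ≤ m2)
    (hsm : ∀ W : Finset (Fin n), 0 < W.card → (W.card : ℝ) ≤ s1 → (eIn G W : ℝ) < m1 * W.card)
    (hmid : ∀ W : Finset (Fin n), 0 < W.card → (W.card : ℝ) ≤ 12 * (β * n) →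
      (eIn G W : ℝ) < m2 * W.card)
    (hs1 : (1 + Real.log n ^ (0.8 : ℝ)) * (n : ℝ) ^ (0.1 : ℝ) ≤ s1)
    (hk1 : 2 * m1 * (1 + Real.log n ^ (0.8 : ℝ)) ≤ k)
    (hkm : 24 * m2 ≤ k) (hk2 : 2 ≤ k) (hkd : (k : ℝ) + 1 ≤ n * p / 150)
    (hcut : ∀ U Z : Finset (Fin n), Disjoint U Z → β * n / 2 ≤ U.card →
      (1 / 3 - 28 * β) * n ≤ Z.card → (1 - ε / 10) * (U.card * Z.card * p) ≤ eBetween G U Z)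
    (hdeg : ∀ U : Finset (Fin n), β * n / 2 ≤ U.card →
      ∑ u ∈ U, (G.degree u : ℝ) ≤ (1 + ε / 10) * (U.card * (n * p)))
    (hr : (4 : ℝ) ^ n * (1 - ε * β / 4) ^ r < 1)
    (hedge : (n : ℝ) * k + r ≤ 2 * 10 ^ 6 * β * ((n : ℝ) ^ 2 * p))
    (H : SimpleGraph (Fin n)) (hH : H ≤ G)
    (hHd : ∀ v : Fin n,
      ((G.degree v : ℝ) < n * p / 100 → (H.degree v : ℝ) ≤ (G.degree v : ℝ) - 2) ∧
      ((n : ℝ) * p / 100 ≤ (G.degree v : ℝ) →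
        (H.degree v : ℝ) ≤ (1 / 3 - ε) * (G.degree v : ℝ))) :
    ∃ Γ0 : SimpleGraph (Fin n), Γ0 ≤ G \ H ∧
      InFamilyL n β Γ0 (Finset.univ \ lowDegSet n (n * p / 100) G)
        (lowDegSet n (n * p / 100) G) ∧
      (edgeCount Γ0 : ℝ) ≤ 2 * 10 ^ 6 * β * ((n : ℝ) ^ 2 * p) ∧
      ∀ E0 : Finset (Sym2 (Fin n)), (E0 : Set (Sym2 (Fin n))) ⊆ G.edgeSet →
        InFamilyL n β (Γ0 ⊔ fromEdgeSet (E0 : Set (Sym2 (Fin n))))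
          (Finset.univ \ lowDegSet n (n * p / 100) G)
          (lowDegSet n (n * p / 100) G) := by
  set D := lowDegSet n (n * p / 100) G with hD
  have hmem : ∀ v, v ∈ D ↔ (G.degree v : ℝ) < n * p / 100 := by
    intro v; rw [hD, lowDegSet, Finset.mem_filter]; simp
  have htr' : ∀ (u v : Fin n) (q : G.Walk u v), q.IsTrail → 0 < q.length → u ∈ D → v ∈ D →
      2 * Real.log n / (3 * Real.log (Real.log n)) < (q.length : ℝ) := by
    intro u v q h1 h2 hu hv
    exact htr u v q h1 h2 ((hmem u).1 hu) ((hmem v).1 hv)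
  have hHD : ∀ v ∈ D, (H.degree v : ℝ) ≤ (G.degree v : ℝ) - 2 :=
    fun v hv => (hHd v).1 ((hmem v).1 hv)
  have hHV : ∀ v ∉ D, (H.degree v : ℝ) ≤ (1 / 3 - ε) * (G.degree v : ℝ) := by
    intro v hv
    rw [hmem, not_lt] at hv
    exact (hHd v).2 hv
  obtain ⟨T, hT, hTr, hTc⟩ := exists_T G H hH D p β ε r hp hβ hε hε1 hβε hβn hHV hcut hdeg hr
  choose N hN hNk hND hNV using exists_N G H p ε k D hD htr' hL hε hk2 hkd hHD hHV
  set B : Finset (Sym2 (Fin n)) := Finset.univ.biUnion (fun v => (N v).image (fun w => s(v, w)))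
    with hB
  have hBG : ∀ e ∈ B ∪ T, e ∈ (G \ H).edgeSet := by
    intro e he
    rcases Finset.mem_union.1 he with he | he
    · rw [hB, Finset.mem_biUnion] at he
      obtain ⟨v, _, he⟩ := he
      rw [Finset.mem_image] at he
      obtain ⟨w, hw, rfl⟩ := he
      have := (Finset.mem_inter.1 (hN v hw)).1
      rw [SimpleGraph.mem_neighborFinset] at this
      exact this
    · exact hT e he
  set Γ0 : SimpleGraph (Fin n) := fromEdgeSet ((B ∪ T : Finset (Sym2 (Fin n))) : Set (Sym2 (Fin n)))
    with hΓ0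
  have hle : Γ0 ≤ G \ H := by
    intro a b hab
    rw [hΓ0, fromEdgeSet_adj] at hab
    have := hBG _ (by simpa using hab.1)
    exact this
  have hadj : ∀ a b, s(a, b) ∈ B ∪ T → Γ0.Adj a b := by
    intro a b hab
    rw [hΓ0, fromEdgeSet_adj]
    refine ⟨by exact_mod_cast hab, ?_⟩
    have : (G \ H).Adj a b := hBG _ hab
    exact this.ne
  have hfam : ∀ Γ : SimpleGraph (Fin n), Γ0 ≤ Γ → Γ ≤ G → InFamilyL n β Γ (Finset.univ \ D) D := by
    intro Γ h1 h2
    have hNsub : ∀ v, N v ⊆ Γ.neighborFinset v ∩ (Finset.univ \ D) := by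
      intro v w hw
      rw [Finset.mem_inter]
      refine ⟨?_, (Finset.mem_inter.1 (hN v hw)).2⟩
      rw [SimpleGraph.mem_neighborFinset]
      apply h1
      apply hadj
      apply Finset.mem_union_left
      rw [hB, Finset.mem_biUnion]
      exact ⟨v, Finset.mem_univ _, Finset.mem_image.2 ⟨w, hw, rfl⟩⟩
    refine family_of G Γ h2 D β k m1 m2 s1 hβ hβ1 hDc hDn hβn htr' hm1 hm2 hsm hmid hs1 hk1 hkm
      ?_ ?_ ?_
    · intro u hu
      exact (hND u hu).trans (Finset.card_le_card (hNsub u))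
    · intro u hu
      exact (hNV u hu).trans (Finset.card_le_card (hNsub u))
    · intro U Z hU hUZ hUc hZc
      obtain ⟨u, hu, z, hz, huz⟩ := hTc U Z hU hUZ hUc hZc
      exact ⟨u, hu, z, hz, h1 (hadj u z (Finset.mem_union_right _ huz))⟩
  have hG : Γ0 ≤ G := hle.trans sdiff_le
  refine ⟨Γ0, hle, hfam Γ0 le_rfl hG, ?_, ?_⟩
  · refine le_trans ?_ hedge
    have h1 : edgeCount Γ0 ≤ (B ∪ T).card := by
      apply edgeCount_le
      intro e he
      rw [hΓ0, edgeSet_fromEdgeSet] at he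
      exact_mod_cast he.1
    have h2 : B.card ≤ n * k := by
      rw [hB]
      refine Finset.card_biUnion_le.trans ?_
      refine (Finset.sum_le_sum (g := fun _ => k) (fun v _ => Finset.card_image_le.trans (hNk v))).trans ?_
      simp
    have h3 : edgeCount Γ0 ≤ n * k + r :=
      h1.trans ((Finset.card_union_le _ _).trans (Nat.add_le_add h2 hTr))
    exact_mod_cast h3
  · intro E0 hE0
    apply hfam _ le_sup_left
    apply sup_le hG
    intro a b hab
    rw [fromEdgeSet_adj] at hab
    exact hE0 hab.1

lemma whp_not {p : ℕ → ℝ} (h0 : ∀ n, 0 ≤ p n) (h1 : ∀ n, p n ≤ 1)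
    {Bd : ∀ n : ℕ, SimpleGraph (Fin n) → Prop} (b : ℕ → ℝ) (hb : Tendsto b atTop (nhds 0))
    (h : ∀ᶠ n in atTop, gnpProb n (p n) (Bd n) ≤ b n) : WHP p (fun n G => ¬ Bd n G) := by
  refine whp_of_bad h0 h1 b hb ?_
  simpa only [not_not] using h

lemma tendsto_log_nat : Tendsto (fun n : ℕ => Real.log n) atTop atTop :=
  Real.tendsto_log_atTop.comp tendsto_natCast_atTop_atTop

lemma tendsto_d {p : ℕ → ℝ} (hd : ∀ᶠ n : ℕ in atTop, Real.log n ≤ n * p n) :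
    Tendsto (fun n : ℕ => n * p n) atTop atTop :=
  tendsto_atTop_mono' _ hd tendsto_log_nat

lemma tendsto_nat_rpow (a : ℝ) (ha : 0 < a) : Tendsto (fun n : ℕ => (n : ℝ) ^ a) atTop atTop :=
  (tendsto_rpow_atTop ha).comp tendsto_natCast_atTop_atTop

lemma tendsto_nat_rpow_neg (a : ℝ) (ha : 0 < a) :
    Tendsto (fun n : ℕ => (n : ℝ) ^ (-a)) atTop (nhds 0) :=
  (tendsto_rpow_neg_atTop ha).comp tendsto_natCast_atTop_atTop

lemma whp_card {p : ℕ → ℝ} (h0 : ∀ n, 0 ≤ p n) (h1 : ∀ n, p n ≤ 1)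
    (hd : ∀ᶠ n : ℕ in atTop, Real.log n ≤ n * p n) :
    WHP p (fun n G => ¬ ((n : ℝ) ^ (0.09 : ℝ) < ((lowDegSet n (n * p n / 100) G).card : ℝ))) := by
  refine whp_not h0 h1 (fun n : ℕ => (n : ℝ) ^ (-(0.03 : ℝ))) (tendsto_nat_rpow_neg _ (by norm_num)) ?_
  filter_upwards [hd, eventually_ge_atTop 3000] with n hn hn3
  have hn3' : (3000 : ℝ) ≤ n := by exact_mod_cast hn3
  have hpos : (0 : ℝ) < n := by linarith
  refine (card_lowdeg_bound (h0 n) (h1 n) _ (by positivity) (by linarith)).trans ?_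
  have h2 : Real.exp (-0.94 * (n * p n)) ≤ (n : ℝ) ^ (-0.94 : ℝ) := by
    rw [Real.rpow_def_of_pos hpos]
    apply Real.exp_le_exp.2
    linarith
  calc (n : ℝ) * Real.exp (-0.94 * (n * p n)) / (n : ℝ) ^ (0.09 : ℝ)
      ≤ (n : ℝ) ^ (1 : ℝ) * (n : ℝ) ^ (-0.94 : ℝ) / (n : ℝ) ^ (0.09 : ℝ) := by
        rw [Real.rpow_one]; gcongr
    _ = (n : ℝ) ^ (-(0.03 : ℝ)) := by
        rw [← Real.rpow_add hpos, ← Real.rpow_sub hpos]; norm_num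

lemma whp_trails {p : ℕ → ℝ} (h0 : ∀ n, 0 ≤ p n) (h1 : ∀ n, p n ≤ 1)
    (hd : ∀ᶠ n : ℕ in atTop, Real.log n ≤ n * p n) :
    WHP p (fun n G => ¬ ∃ (u v : Fin n) (q : G.Walk u v), q.IsTrail ∧ 0 < q.length ∧
      (q.length : ℝ) ≤ 2 * Real.log n / (3 * Real.log (Real.log n)) ∧
      (G.degree u : ℝ) < n * p n / 100 ∧ (G.degree v : ℝ) < n * p n / 100) := by
  have hlim : Tendsto (fun n : ℕ => Real.log n * (2 * Real.exp (-0.2 * Real.log n))) atTop (nhds 0) := by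
    have h := (tendsto_rpow_mul_exp_neg_mul_atTop_nhds_zero 1 0.2 (by norm_num)).comp tendsto_log_nat
    have h2 := h.const_mul 2
    rw [mul_zero] at h2
    refine h2.congr (fun n => ?_)
    simp only [Function.comp, Real.rpow_one]; ring
  refine whp_not h0 h1 _ hlim ?_
  have hlo : ∀ᶠ n : ℕ in atTop, Real.log n ≤ 0.0001 * n := by
    have := (Real.isLittleO_log_id_atTop.bound (show (0 : ℝ) < 0.0001 by norm_num))
    have h2 := tendsto_natCast_atTop_atTop.eventually this
    filter_upwards [h2, eventually_ge_atTop 1] with n hn h1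
    have h3 : (0 : ℝ) ≤ Real.log n := Real.log_natCast_nonneg n
    simpa [abs_of_nonneg h3] using hn
  filter_upwards [hd, eventually_ge_atTop 30000, hlo, tendsto_log_nat.eventually_ge_atTop 1,
    (Real.tendsto_log_atTop.comp tendsto_log_nat).eventually_ge_atTop 7] with n hn hn3 hlo hl1 hll
  simp only [Function.comp] at hll
  have hn3' : (30000 : ℝ) ≤ n := by exact_mod_cast hn3
  have hpos : (0 : ℝ) < n := by linarith
  set l := Real.log n with hl
  set ll := Real.log l with hlldef
  set d := (n : ℝ) * p n with hdd
  have hLl : 2 * l / (3 * ll) ≤ l := by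
    rw [div_le_iff₀ (by linarith)]; nlinarith
  have hL0 : 0 ≤ 2 * l / (3 * ll) := by positivity
  refine (trails_bound (h0 n) (h1 n) _ hL0 (by linarith) (by linarith)).trans ?_
  rw [← hdd]
  have hdpos : 0 < d := by linarith
  have hlpos : 0 < l := by linarith
  have hkey : Real.log d * (2 * l / (3 * ll)) ≤ 2 / 3 * l + 0.1 * (d - l) := by
    have e1 : Real.log d ≤ ll + (d / l - 1) := by
      have := Real.log_le_sub_one_of_pos (show 0 < d / l by positivity)
      rw [Real.log_div hdpos.ne' hlpos.ne'] at this
      linarith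
    have e2 : Real.log d * (2 * l / (3 * ll)) ≤ (ll + (d / l - 1)) * (2 * l / (3 * ll)) := by gcongr
    have e3 : (ll + (d / l - 1)) * (2 * l / (3 * ll)) = 2 / 3 * l + 2 / (3 * ll) * (d - l) := by
      have : ll ≠ 0 := by linarith
      field_simp
    have e4 : 2 / (3 * ll) ≤ 0.1 := by
      rw [div_le_iff₀ (by linarith)]; linarith
    have e5 : 2 / (3 * ll) * (d - l) ≤ 0.1 * (d - l) :=
      mul_le_mul_of_nonneg_right e4 (by linarith)
    linarith
  have hr : d ^ (2 * l / (3 * ll)) ≤ Real.exp (2 / 3 * l + 0.1 * (d - l)) := by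
    rw [Real.rpow_def_of_pos hdpos]; exact Real.exp_le_exp.2 hkey
  have hne : (n : ℝ) = Real.exp l := (Real.exp_log hpos).symm
  have hA : (n : ℝ) * d ^ (2 * l / (3 * ll)) * Real.exp (-1.88 * d) ≤ Real.exp (-0.2 * l) := by
    calc _ ≤ Real.exp l * Real.exp (2 / 3 * l + 0.1 * (d - l)) * Real.exp (-1.88 * d) := by
          rw [← hne]; gcongr
      _ = Real.exp (l + (2 / 3 * l + 0.1 * (d - l)) + (-1.88 * d)) := by
          rw [← Real.exp_add, ← Real.exp_add]
      _ ≤ _ := Real.exp_le_exp.2 (by linarith)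
  have hB : d ^ (2 * l / (3 * ll)) * Real.exp (-0.94 * d) ≤ Real.exp (-0.2 * l) := by
    calc _ ≤ Real.exp (2 / 3 * l + 0.1 * (d - l)) * Real.exp (-0.94 * d) := by gcongr
      _ = Real.exp ((2 / 3 * l + 0.1 * (d - l)) + (-0.94 * d)) := by rw [← Real.exp_add]
      _ ≤ _ := Real.exp_le_exp.2 (by linarith)
  apply mul_le_mul hLl (by linarith) (by positivity) hlpos.le

lemma whp_small {p : ℕ → ℝ} (h0 : ∀ n, 0 ≤ p n) (h1 : ∀ n, p n ≤ 1)
    (hd : ∀ᶠ n : ℕ in atTop, Real.log n ≤ n * p n) :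
    WHP p (fun n G => ¬ ∃ W : Finset (Fin n), 0 < W.card ∧ (W.card : ℝ) ≤ (n : ℝ) ^ (0.11 : ℝ) ∧
      (n * p n) ^ (0.15 : ℝ) * W.card ≤ (eIn G W : ℝ)) := by
  have hlim : Tendsto (fun n : ℕ => 18 * (n : ℝ) ^ (-(2 : ℝ))) atTop (nhds 0) := by
    have := (tendsto_nat_rpow_neg 2 (by norm_num)).const_mul 18
    rwa [mul_zero] at this
  refine whp_not h0 h1 _ hlim ?_
  filter_upwards [hd, eventually_ge_atTop 6, (tendsto_nat_rpow 0.01 (by norm_num)).eventually_ge_atTop 3,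
    ((tendsto_rpow_atTop (show (0 : ℝ) < 0.15 by norm_num)).comp (tendsto_d hd)).eventually_ge_atTop 101,
    (tendsto_d hd).eventually_ge_atTop 1]
    with n hn hn6 hn3 hm hd1
  simp only [Function.comp] at hm
  have hn6' : (6 : ℝ) ≤ n := by exact_mod_cast hn6
  have hpos : (0 : ℝ) < n := by linarith
  have hp : 0 < p n := by
    rcases (h0 n).lt_or_eq with h | h
    · exact h
    · rw [← h] at hd1; norm_num at hd1
  have he : Real.exp 1 ≤ 3 := by have := Real.exp_one_lt_d9; linarith
  have he2 : Real.exp 1 ^ 2 ≤ 9 := by nlinarith [Real.exp_pos 1]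
  set m := (n * p n) ^ (0.15 : ℝ) with hmdef
  have hx : Real.exp 1 * p n * (n : ℝ) ^ (0.11 : ℝ) / m ≤ (n : ℝ) ^ (-0.03 : ℝ) := by
    rw [div_le_iff₀ (by linarith), hmdef, Real.mul_rpow hpos.le hp.le]
    have e1 : p n ≤ p n ^ (0.15 : ℝ) := by
      have := Real.rpow_le_rpow_of_exponent_ge hp (h1 n) (show (0.15 : ℝ) ≤ 1 by norm_num)
      rwa [Real.rpow_one] at this
    calc Real.exp 1 * p n * (n : ℝ) ^ (0.11 : ℝ)
        ≤ (n : ℝ) ^ (0.01 : ℝ) * p n ^ (0.15 : ℝ) * (n : ℝ) ^ (0.11 : ℝ) := by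
          gcongr; linarith
      _ = ((n : ℝ) ^ (0.01 : ℝ) * (n : ℝ) ^ (0.11 : ℝ)) * p n ^ (0.15 : ℝ) := by ring
      _ = ((n : ℝ) ^ (-0.03 : ℝ) * (n : ℝ) ^ (0.15 : ℝ)) * p n ^ (0.15 : ℝ) := by
          rw [← Real.rpow_add hpos, ← Real.rpow_add hpos]; norm_num
      _ = _ := by ring
  have hx1 : (n : ℝ) ^ (-0.03 : ℝ) ≤ 1 :=
    Real.rpow_le_one_of_one_le_of_nonpos (by linarith) (by norm_num)
  have hη : Real.exp 1 ^ 2 * (n * p n) / m * (Real.exp 1 * p n * (n : ℝ) ^ (0.11 : ℝ) / m) ^ (m - 1)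
      ≤ 9 * (n : ℝ) ^ (-(2 : ℝ)) := by
    have e1 : Real.exp 1 ^ 2 * (n * p n) / m ≤ 9 * (n : ℝ) ^ (1 : ℝ) := by
      rw [div_le_iff₀ (by linarith), Real.rpow_one]
      have : (n : ℝ) * p n ≤ n := by nlinarith [h1 n]
      calc Real.exp 1 ^ 2 * (n * p n) ≤ 9 * n := by gcongr
        _ ≤ 9 * n * m := le_mul_of_one_le_right (by positivity) (by linarith)
    have e2 : (Real.exp 1 * p n * (n : ℝ) ^ (0.11 : ℝ) / m) ^ (m - 1) ≤ (n : ℝ) ^ (-3 : ℝ) := by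
      calc _ ≤ ((n : ℝ) ^ (-0.03 : ℝ)) ^ (m - 1) :=
            Real.rpow_le_rpow (by positivity) hx (by linarith)
        _ ≤ ((n : ℝ) ^ (-0.03 : ℝ)) ^ (100 : ℝ) :=
            Real.rpow_le_rpow_of_exponent_ge (by positivity) hx1 (by linarith)
        _ = _ := by rw [← Real.rpow_mul hpos.le]; norm_num
    calc _ ≤ (9 * (n : ℝ) ^ (1 : ℝ)) * (n : ℝ) ^ (-3 : ℝ) :=
          mul_le_mul e1 e2 (by positivity) (by positivity)
      _ = _ := by rw [mul_assoc, ← Real.rpow_add hpos]; norm_num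
  have hη2 : 9 * (n : ℝ) ^ (-(2 : ℝ)) ≤ 1 / 2 := by
    rw [Real.rpow_neg hpos.le, Real.rpow_two, ← div_eq_mul_inv, div_le_iff₀ (by positivity)]
    nlinarith
  refine (dense_bound (by omega) hp (h1 n) m _ (by linarith) (by positivity) (hx.trans hx1)
    (hη.trans hη2)).trans ?_
  linarith

lemma whp_mid {p : ℕ → ℝ} (h0 : ∀ n, 0 ≤ p n) (h1 : ∀ n, p n ≤ 1)
    (hd : ∀ᶠ n : ℕ in atTop, Real.log n ≤ n * p n) (β : ℝ) (hβ : 0 < β) :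
    WHP p (fun n G => ¬ ∃ W : Finset (Fin n), 0 < W.card ∧ (W.card : ℝ) ≤ 12 * (β * n) ∧
      (50 * β * (n * p n)) * W.card ≤ (eIn G W : ℝ)) := by
  have hdT := tendsto_d hd
  have hmT : Tendsto (fun n : ℕ => 50 * β * (n * p n)) atTop atTop :=
    hdT.const_mul_atTop (by positivity)
  have he : Real.exp 1 < 3 := by have := Real.exp_one_lt_d9; linarith
  have he0 := Real.exp_pos 1
  have hlim0 : Tendsto (fun n : ℕ => Real.exp 1 ^ 2 / (50 * β) *
      (12 * Real.exp 1 / 50) ^ (50 * β * (n * p n) - 1)) atTop (nhds 0) := by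
    have h := (tendsto_rpow_atTop_of_base_lt_one (12 * Real.exp 1 / 50) (by linarith) (by linarith)).comp
      (tendsto_atTop_add_const_right _ (-1) hmT)
    have h2 := h.const_mul (Real.exp 1 ^ 2 / (50 * β))
    rw [mul_zero] at h2
    exact h2
  have hlim := hlim0.const_mul 2
  rw [mul_zero] at hlim
  refine whp_not h0 h1 _ hlim ?_
  filter_upwards [hd, hdT.eventually_ge_atTop 1, hmT.eventually_ge_atTop 1, eventually_gt_atTop 0,
    hlim0.eventually_le_const (show (0 : ℝ) < 1 / 2 by norm_num)] with n hn hd1 hm1 hn0 hhalf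
  have hpos : (0 : ℝ) < n := by exact_mod_cast hn0
  have hp : 0 < p n := by
    rcases (h0 n).lt_or_eq with h | h
    · exact h
    · rw [← h] at hd1; norm_num at hd1
  have ex : Real.exp 1 * p n * (12 * (β * n)) / (50 * β * (n * p n)) = 12 * Real.exp 1 / 50 := by
    field_simp
  have ey : Real.exp 1 ^ 2 * (n * p n) / (50 * β * (n * p n)) = Real.exp 1 ^ 2 / (50 * β) := by
    field_simp
  have := dense_bound hn0 hp (h1 n) (50 * β * (n * p n)) (12 * (β * n)) hm1 (by positivity)
    (by rw [ex]; linarith) (by rw [ex, ey]; exact hhalf)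
  rw [ex, ey] at this
  exact this

lemma tendsto_pow_exp {p : ℕ → ℝ} (hdT : Tendsto (fun n : ℕ => n * p n) atTop atTop)
    (b c : ℝ) (hb : 0 < b) (hc : 0 < c) :
    Tendsto (fun n : ℕ => b ^ n * Real.exp (-(c * (n * (n * p n))))) atTop (nhds 0) := by
  have h1 : Tendsto (fun n : ℕ => Real.exp (-(n : ℝ))) atTop (nhds 0) :=
    Real.tendsto_exp_neg_atTop_nhds_zero.comp tendsto_natCast_atTop_atTop
  refine squeeze_zero' (Eventually.of_forall fun n => by positivity) ?_ h1
  filter_upwards [hdT.eventually_ge_atTop ((Real.log b + 1) / c)] with n hn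
  have hb' : b ^ n = Real.exp (n * Real.log b) := by
    rw [mul_comm, Real.exp_mul, Real.exp_log hb, Real.rpow_natCast]
  rw [hb', ← Real.exp_add]
  apply Real.exp_le_exp.2
  rw [div_le_iff₀ hc] at hn
  have : (0 : ℝ) ≤ n := Nat.cast_nonneg n
  nlinarith

lemma whp_cut {p : ℕ → ℝ} (h0 : ∀ n, 0 ≤ p n) (h1 : ∀ n, p n ≤ 1)
    (hd : ∀ᶠ n : ℕ in atTop, Real.log n ≤ n * p n) (δ θ : ℝ) (hδ : 0 < δ) (hδ1 : δ ≤ 1)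
    (hθ : 0 < θ) :
    WHP p (fun n G => ¬ ∃ U Z : Finset (Fin n), Disjoint U Z ∧
      θ * (n : ℝ) ^ 2 ≤ U.card * Z.card ∧
      (eBetween G U Z : ℝ) ≤ (1 - δ) * (U.card * Z.card * p n)) := by
  refine whp_not h0 h1 _ (tendsto_pow_exp (tendsto_d hd) 4 (δ ^ 2 / 2 * θ) (by norm_num)
    (by positivity)) (Eventually.of_forall fun n => ?_)
  refine (cut_bound (h0 n) (h1 n) δ θ hδ hδ1).trans (le_of_eq ?_)
  congr 2; ring

lemma whp_degsum {p : ℕ → ℝ} (h0 : ∀ n, 0 ≤ p n) (h1 : ∀ n, p n ≤ 1)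
    (hd : ∀ᶠ n : ℕ in atTop, Real.log n ≤ n * p n) (δ θ : ℝ) (hδ : 0 < δ) (hδ1 : δ ≤ 1)
    (hθ : 0 < θ) :
    WHP p (fun n G => ¬ ∃ U : Finset (Fin n), θ * n ≤ U.card ∧
      (1 + δ) * (U.card * (n * p n)) ≤ ∑ u ∈ U, (G.degree u : ℝ)) := by
  refine whp_not h0 h1 _ (tendsto_pow_exp (tendsto_d hd) 2 (δ ^ 2 / 8 * θ) (by norm_num)
    (by positivity)) (Eventually.of_forall fun n => ?_)
  refine (degsum_bound (h0 n) (h1 n) δ θ hδ hδ1).trans (le_of_eq ?_)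
  congr 2; ring

set_option maxHeartbeats 1000000

/-- Corollary 4.9: for every `ε > 0` there is `β₀ > 0` such that for `0 < β ≤ β₀` and
`p = (ln n + ln ln n + ω(1))/n`, w.h.p.: for every `H ⊆ G` with `d_H ≤ d̃(t, ε)`
(`t = np/100`), the graph `G - H` contains `Γ₀ ∈ 𝓛(n, β)` with at most `2·10⁶ β n² p`
edges, and `Γ₀ + E₀ ∈ 𝓛(n, β)` for every `E₀ ⊆ E(G)`, with witnessing partition
`V = V₁ ∪ D_t(G)`. -/
theorem stmt15 (ε : ℝ) (hε : 0 < ε) :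
    ∃ β0 : ℝ, 0 < β0 ∧ ∀ β : ℝ, 0 < β → β ≤ β0 →
      ∀ p : ℕ → ℝ, (∀ n, 0 ≤ p n) → (∀ n, p n ≤ 1) →
        Tendsto (fun n : ℕ => n * p n - Real.log n - Real.log (Real.log n)) atTop atTop →
        WHP p (fun n G =>
          ∀ H : SimpleGraph (Fin n), H ≤ G →
            (∀ v : Fin n,
              ((G.degree v : ℝ) < n * p n / 100 → (H.degree v : ℝ) ≤ (G.degree v : ℝ) - 2) ∧
              ((n : ℝ) * p n / 100 ≤ (G.degree v : ℝ) →
                (H.degree v : ℝ) ≤ (1 / 3 - ε) * (G.degree v : ℝ))) →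
            ∃ Γ0 : SimpleGraph (Fin n), Γ0 ≤ G \ H ∧
              InFamilyL n β Γ0 (Finset.univ \ lowDegSet n (n * p n / 100) G)
                (lowDegSet n (n * p n / 100) G) ∧
              (edgeCount Γ0 : ℝ) ≤ 2 * 10 ^ 6 * β * ((n : ℝ) ^ 2 * p n) ∧
              ∀ E0 : Finset (Sym2 (Fin n)), (E0 : Set (Sym2 (Fin n))) ⊆ G.edgeSet →
                InFamilyL n β (Γ0 ⊔ fromEdgeSet (E0 : Set (Sym2 (Fin n))))
                  (Finset.univ \ lowDegSet n (n * p n / 100) G)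
                  (lowDegSet n (n * p n / 100) G)) := by
  set ε' := min ε (1 / 3) with hε'
  have hε'0 : 0 < ε' := lt_min hε (by norm_num)
  have hε'1 : ε' ≤ 1 / 3 := min_le_right _ _
  have hε'ε : ε' ≤ ε := min_le_left _ _
  refine ⟨min (1 / 10 ^ 6) (ε' / 100), lt_min (by norm_num) (by positivity), ?_⟩
  intro β hβ hβ0 p h0 h1 hT
  have hβ6 : β ≤ 1 / 10 ^ 6 := hβ0.trans (min_le_left _ _)
  have hβε : β ≤ ε' / 100 := hβ0.trans (min_le_right _ _)
  have hd : ∀ᶠ n : ℕ in atTop, Real.log n ≤ n * p n := by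
    filter_upwards [hT.eventually_ge_atTop 0,
      (Real.tendsto_log_atTop.comp tendsto_log_nat).eventually_ge_atTop 0] with n h2 h3
    simp only [Function.comp] at h3
    linarith
  have hdT := tendsto_d hd
  have hθ : 0 < β / 2 * (1 / 3 - 28 * β) := by
    apply mul_pos (by positivity); norm_num at hβ6; linarith
  have hW := WHP.and h0 h1 (whp_card h0 h1 hd) (WHP.and h0 h1 (whp_trails h0 h1 hd)
    (WHP.and h0 h1 (whp_small h0 h1 hd) (WHP.and h0 h1 (whp_mid h0 h1 hd β hβ)
    (WHP.and h0 h1 (whp_cut h0 h1 hd (ε' / 10) (β / 2 * (1 / 3 - 28 * β)) (by positivity)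
      (by linarith) hθ)
    (whp_degsum h0 h1 hd (ε' / 10) (β / 2) (by positivity) (by linarith) (by positivity))))))
  refine WHP.mono h0 h1 hW ?_
  set σ := ε' * β / 4 with hσ
  have hσ0 : 0 < σ := by positivity
  have hloglog : ∀ᶠ n : ℕ in atTop,
      ‖Real.log (Real.log n)‖ ≤ 1 / 3 * ‖id (Real.log n)‖ :=
    tendsto_log_nat.eventually
      (Real.isLittleO_log_id_atTop.bound (show (0 : ℝ) < 1 / 3 by norm_num))
  have hlogn : ∀ᶠ n : ℕ in atTop,
      ‖Real.log n‖ ≤ 1 / 2 * ‖(n : ℝ) ^ (0.01 : ℝ)‖ :=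
    tendsto_natCast_atTop_atTop.eventually
      ((isLittleO_log_rpow_atTop (show (0 : ℝ) < 0.01 by norm_num)).bound
        (show (0 : ℝ) < 1 / 2 by norm_num))
  filter_upwards [hd, eventually_gt_atTop 0, hdT.eventually_ge_atTop 1000,
    hdT.eventually_ge_atTop (1 / (100 * β)), hdT.eventually_ge_atTop ((2 / σ + 1) / (1000 * β)),
    ((tendsto_rpow_atTop (show (0 : ℝ) < 0.05 by norm_num)).comp hdT).eventually_ge_atTop
      (1 / (300 * β)),
    (tendsto_nat_rpow 0.91 (by norm_num)).eventually_ge_atTop (1 / β),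
    (tendsto_natCast_atTop_atTop (R := ℝ)).eventually_ge_atTop (4 / β),
    hloglog, hlogn, tendsto_log_nat.eventually_ge_atTop 1,
    (Real.tendsto_log_atTop.comp tendsto_log_nat).eventually_ge_atTop 1]
    with n hdl hn0 hd1 hd2 hd3 hd4 hn9 hn4 hll hln hl1 hll1
  simp only [Function.comp] at hd4 hll1
  have hpos : (0 : ℝ) < n := by exact_mod_cast hn0
  have hp : 0 < p n := by
    rcases (h0 n).lt_or_eq with h | h
    · exact h
    · rw [← h] at hd1; norm_num at hd1
  rw [div_le_iff₀ (by positivity)] at hd2 hd3 hd4 hn9 hn4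
  have hn1 : (1 : ℝ) ≤ n := by exact_mod_cast hn0
  norm_num at hβ6
  have hk_up : (⌈1200 * β * (n * p n)⌉₊ : ℝ) < 1200 * β * (n * p n) + 1 :=
    Nat.ceil_lt_add_one (by positivity)
  have hk_lo : 1200 * β * (n * p n) ≤ (⌈1200 * β * (n * p n)⌉₊ : ℝ) := Nat.le_ceil _
  have hr_up : (⌈2 * n / σ⌉₊ : ℝ) < 2 * n / σ + 1 := Nat.ceil_lt_add_one (by positivity)
  have hr_lo : 2 * n / σ ≤ (⌈2 * n / σ⌉₊ : ℝ) := Nat.le_ceil _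
  rintro G ⟨gD, gT, gS, gM, gC, gG⟩ H hH hHd
  have hlogn0 : (0 : ℝ) ≤ Real.log n := by linarith
  refine determ G (p n) β ε' ⌈1200 * β * (n * p n)⌉₊ ⌈2 * n / σ⌉₊ ((n * p n) ^ (0.15 : ℝ))
    (50 * β * (n * p n)) ((n : ℝ) ^ (0.11 : ℝ)) hp hβ (by linarith) hε'0 hε'1 hβε (by linarith)
    (not_lt.1 gD) ?_ ?_ ?_ (by positivity) (by positivity) ?_ ?_ ?_ ?_ (by linarith) ?_ ?_ ?_ ?_ ?_ ?_
    H hH ?_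
  · have e1 : (n : ℝ) ^ (0.09 : ℝ) * (n : ℝ) ^ (0.91 : ℝ) = n := by
      rw [← Real.rpow_add hpos]; norm_num
    have e2 : (0 : ℝ) < (n : ℝ) ^ (0.09 : ℝ) := by positivity
    nlinarith
  · intro u v q h2 h3 h4 h5
    by_contra h6
    exact gT ⟨u, v, q, h2, h3, not_lt.1 h6, h4, h5⟩
  · rw [le_div_iff₀ (by linarith)]
    rw [Real.norm_of_nonneg (by linarith), id, Real.norm_of_nonneg hlogn0] at hll
    linarith
  · intro W h2 h3
    by_contra h6
    exact gS ⟨W, h2, h3, not_lt.1 h6⟩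
  · intro W h2 h3
    by_contra h6
    exact gM ⟨W, h2, h3, not_lt.1 h6⟩
  · rw [Real.norm_of_nonneg hlogn0, Real.norm_of_nonneg (by positivity)] at hln
    have e1 : Real.log n ^ (0.8 : ℝ) ≤ Real.log n := by
      have := Real.rpow_le_rpow_of_exponent_le hl1 (show (0.8 : ℝ) ≤ 1 by norm_num)
      rwa [Real.rpow_one] at this
    calc (1 + Real.log n ^ (0.8 : ℝ)) * (n : ℝ) ^ (0.1 : ℝ)
        ≤ (n : ℝ) ^ (0.01 : ℝ) * (n : ℝ) ^ (0.1 : ℝ) := by gcongr; linarith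
      _ = (n : ℝ) ^ (0.11 : ℝ) := by rw [← Real.rpow_add hpos]; norm_num
  · refine le_trans ?_ hk_lo
    have hdp : 0 < n * p n := by positivity
    set d := (n : ℝ) * p n with hdd
    have e1 : Real.log n ^ (0.8 : ℝ) ≤ d ^ (0.8 : ℝ) :=
      Real.rpow_le_rpow hlogn0 hdl (by norm_num)
    have e2 : 1 ≤ d ^ (0.8 : ℝ) := Real.one_le_rpow (by linarith) (by norm_num)
    have e3 : d ^ (0.15 : ℝ) * d ^ (0.8 : ℝ) * d ^ (0.05 : ℝ) = d := by
      rw [← Real.rpow_add hdp, ← Real.rpow_add hdp]; norm_num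
    have e4 : 0 < d ^ (0.15 : ℝ) := by positivity
    calc 2 * d ^ (0.15 : ℝ) * (1 + Real.log n ^ (0.8 : ℝ))
        ≤ 2 * d ^ (0.15 : ℝ) * (d ^ (0.8 : ℝ) + d ^ (0.8 : ℝ)) := by gcongr
      _ = 4 * (d ^ (0.15 : ℝ) * d ^ (0.8 : ℝ)) * 1 := by ring
      _ ≤ 4 * (d ^ (0.15 : ℝ) * d ^ (0.8 : ℝ)) * (d ^ (0.05 : ℝ) * (300 * β)) := by gcongr
      _ = 1200 * β * (d ^ (0.15 : ℝ) * d ^ (0.8 : ℝ) * d ^ (0.05 : ℝ)) := by ring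
      _ = 1200 * β * d := by rw [e3]
  · have : (2 : ℝ) ≤ (⌈1200 * β * (n * p n)⌉₊ : ℝ) := by linarith
    exact_mod_cast this
  · have : β * (n * p n) ≤ 1 / 1000000 * (n * p n) := by gcongr
    linarith
  · intro U Z hUZ hU hZ
    by_contra h6
    refine gC ⟨U, Z, hUZ, ?_, (not_le.1 h6).le⟩
    calc β / 2 * (1 / 3 - 28 * β) * (n : ℝ) ^ 2 = (β * n / 2) * ((1 / 3 - 28 * β) * n) := by ring
      _ ≤ _ := mul_le_mul hU hZ (by apply mul_nonneg; linarith; exact hpos.le) (by positivity)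
  · intro U hU
    by_contra h6
    exact gG ⟨U, by linarith, (not_le.1 h6).le⟩
  · rw [← hσ]
    have hσ1 : σ ≤ 1 := by rw [hσ]; nlinarith
    have e1 : (1 - σ) ^ ⌈2 * n / σ⌉₊ ≤ Real.exp (-(2 * n)) := by
      calc (1 - σ) ^ ⌈2 * n / σ⌉₊ ≤ (Real.exp (-σ)) ^ ⌈2 * n / σ⌉₊ := by
            apply pow_le_pow_left₀ (by linarith)
            have := Real.add_one_le_exp (-σ); linarith
        _ = Real.exp (-(⌈2 * n / σ⌉₊ * σ)) := by rw [← Real.exp_nat_mul]; ring_nf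
        _ ≤ _ := by
            apply Real.exp_le_exp.2
            rw [div_le_iff₀ hσ0] at hr_lo
            linarith
    have e2 : (4 : ℝ) ^ n = Real.exp (n * (2 * Real.log 2)) := by
      rw [Real.exp_nat_mul, mul_comm 2, Real.exp_mul, Real.exp_log (by norm_num)]; norm_num
    have e3 := Real.log_two_lt_d9
    calc (4 : ℝ) ^ n * (1 - σ) ^ ⌈2 * n / σ⌉₊
        ≤ Real.exp (n * (2 * Real.log 2)) * Real.exp (-(2 * n)) := by rw [e2]; gcongr
      _ = Real.exp (n * (2 * Real.log 2) + -(2 * n)) := by rw [Real.exp_add]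
      _ < 1 := by
          rw [Real.exp_lt_one_iff]
          nlinarith
  · have e1 : (⌈2 * n / σ⌉₊ : ℝ) ≤ n * (2 / σ + 1) := by
      have : 2 * (n : ℝ) / σ = n * (2 / σ) := by ring
      nlinarith
    have e2 : (n : ℝ) * (2 / σ + 1) ≤ n * (n * p n * (1000 * β)) := by gcongr
    have e3 : (n : ℝ) * ⌈1200 * β * (n * p n)⌉₊ ≤ n * (1300 * β * (n * p n)) := by
      gcongr; linarith
    have e4 : (0 : ℝ) ≤ β * (n ^ 2 * p n) := by positivity
    nlinarith
  · intro v
    refine ⟨(hHd v).1, fun h => ((hHd v).2 h).trans ?_⟩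
    gcongr
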